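/- arXiv:1504.06783 — 2 statements merged into one kernel-verified Lean document; each statement's English description precedes it below -/
import Mathlib

section
/- Let R be a Noetherian ring and M a nonzero finitely generated R-module with dimension filtration {D_i}_{0≤i≤ℓ}. Suppose dim R/p = dim R_P/pR_P for every p ∈ Ass_R M and every maximal ideal P containing p. Then M is sequentially Cohen-Macaulay over R if and only if M_P is sequentially Cohen-Macaulay over R_P for every P ∈ Supp_R M. -/
open IsLocalRing

/-- The (Krull) dimension of a module: `dim_R M = dim (R / ann_R M)`;
the zero module has dimension `⊥` (i.e. `-∞`). -/
noncomputable def moduleDim (R : Type*) [CommRing R] (M : Type*) [AddCommGroup M]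
    [Module R M] : WithBot ℕ∞ :=
  ringKrullDim (R ⧸ Module.annihilator R M)

/-- `dimLe d n` means `d ≤ n` where `n : ℤ` and `d` is a dimension in `WithBot ℕ∞`
(so for `n < 0` this means `d = ⊥`, i.e. the module is zero). -/
def dimLe (d : WithBot ℕ∞) (n : ℤ) : Prop :=
  if 0 ≤ n then d ≤ ((n.toNat : ℕ∞) : WithBot ℕ∞) else d = ⊥

/-- The depth of a module over a Noetherian local ring: the supremum of lengths of
regular sequences on `M` contained in the maximal ideal. -/
noncomputable def moduleDepth (R : Type*) [CommRing R] [IsLocalRing R] (M : Type*)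
    [AddCommGroup M] [Module R M] : ℕ∞ :=
  sSup {n : ℕ∞ | ∃ rs : List R, (rs.length : ℕ∞) = n ∧
    (∀ r ∈ rs, r ∈ maximalIdeal R) ∧ RingTheory.Sequence.IsRegular M rs}

/-- A module over a Noetherian local ring is Cohen-Macaulay if it is zero or
`depth M = dim M`. -/
def IsCMModule (R : Type*) [CommRing R] [IsLocalRing R] (M : Type*) [AddCommGroup M]
    [Module R M] : Prop :=
  Nontrivial M → (moduleDepth R M : WithBot ℕ∞) = moduleDim R M

/-- A module over a (not necessarily local) commutative ring is Cohen-Macaulay if all its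
localizations at primes are Cohen-Macaulay. -/
def IsCMModuleGen (R : Type*) [CommRing R] (M : Type*) [AddCommGroup M] [Module R M] : Prop :=
  ∀ (P : Ideal R) [P.IsPrime],
    IsCMModule (Localization.AtPrime P) (LocalizedModule P.primeCompl M)

/-- `D : Fin (ℓ+1) → Submodule R M` is the dimension filtration of `M`:
`D 0 = 0`, `D ℓ = M`, the chain is strictly increasing, each `D i` (for `i ≥ 1`) is the
largest submodule of its dimension, and every nonzero submodule which is largest among
submodules of dimension at most its own dimension occurs in the chain. -/
def IsDimFiltration (R : Type*) [CommRing R] (M : Type*) [AddCommGroup M] [Module R M]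
    (ℓ : ℕ) (D : Fin (ℓ + 1) → Submodule R M) : Prop :=
  D 0 = ⊥ ∧ D (Fin.last ℓ) = ⊤ ∧ StrictMono D ∧
  (∀ i : Fin ℓ, IsGreatest
    {N : Submodule R M | moduleDim R ↥N ≤ moduleDim R ↥(D i.succ)} (D i.succ)) ∧
  (∀ N : Submodule R M, N ≠ ⊥ →
    IsGreatest {N' : Submodule R M | moduleDim R ↥N' ≤ moduleDim R ↥N} N → ∃ i, D i = N)

/-- A module over a local ring is sequentially Cohen-Macaulay if the consecutive quotients
of its dimension filtration are Cohen-Macaulay. -/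
def IsSeqCM (R : Type*) [CommRing R] [IsLocalRing R] (M : Type*) [AddCommGroup M]
    [Module R M] : Prop :=
  ∃ (ℓ : ℕ) (D : Fin (ℓ + 1) → Submodule R M), IsDimFiltration R M ℓ D ∧
    ∀ i : Fin ℓ, IsCMModule R
      (↥(D i.succ) ⧸ (D i.castSucc).comap (D i.succ).subtype)

/-- Sequentially Cohen-Macaulay over a not necessarily local ring. -/
def IsSeqCMGen (R : Type*) [CommRing R] (M : Type*) [AddCommGroup M] [Module R M] : Prop :=
  ∃ (ℓ : ℕ) (D : Fin (ℓ + 1) → Submodule R M), IsDimFiltration R M ℓ D ∧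
    ∀ i : Fin ℓ, IsCMModuleGen R
      (↥(D i.succ) ⧸ (D i.castSucc).comap (D i.succ).subtype)

/-- A local ring is sequentially Cohen-Macaulay if it is so as a module over itself. -/
def IsSeqCMRing (R : Type*) [CommRing R] [IsLocalRing R] : Prop := IsSeqCM R R

section AssociatedPrimes

variable {R : Type*} [CommRing R] [IsNoetherianRing R] {M : Type*} [AddCommGroup M] [Module R M]

theorem exists_associatedPrime_le_of_annihilator_le (N : Submodule R M) {m : M} (hm : m ∈ N)
    (q : Ideal R) [q.IsPrime] (h : ∀ s : R, s • m = 0 → s ∈ q) :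
    ∃ q₀ ∈ associatedPrimes R N, q₀ ≤ q ∧ ∀ s : R, s • m = 0 → s ∈ q₀ := by
  have hann : Module.annihilator R (Submodule.span R {m}) ≤ q := by
    intro s hs
    apply h
    rw [Submodule.mem_annihilator_span_singleton] at hs
    exact hs
  obtain ⟨q₀, hq₀, hle⟩ := Ideal.exists_minimalPrimes_le hann
  refine ⟨q₀, ?_, hle, fun s hs => hq₀.1.2 ?_⟩
  · exact associatedPrimes.subset_of_injective
      (Submodule.inclusion_injective ((Submodule.span_singleton_le_iff_mem m N).2 hm))
      (Module.associatedPrimes.minimalPrimes_annihilator_subset_associatedPrimes R _ hq₀)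
  · rwa [Submodule.mem_annihilator_span_singleton]

/-- The submodule of elements whose associated primes all lie in `S` (for `S` an upper set). -/
def supportedPart (M : Type*) [AddCommGroup M] [Module R M] (S : Set (Ideal R)) :
    Submodule R M where
  carrier := {m | ∀ q ∈ associatedPrimes R M, q ∉ S → ∃ s ∉ q, s • m = 0}
  zero_mem' q hq _ := ⟨1, (Ideal.ne_top_iff_one q).1 hq.1.ne_top, smul_zero _⟩
  add_mem' {a b} ha hb q hq hS := by
    obtain ⟨s, hs, hsa⟩ := ha q hq hS
    obtain ⟨t, ht, htb⟩ := hb q hq hS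
    have := hq.1
    refine ⟨s * t, fun h => (this.mem_or_mem h).elim hs ht, ?_⟩
    rw [smul_add, mul_smul s t b, htb, mul_comm, mul_smul, hsa]
    simp
  smul_mem' c x hx q hq hS := by
    obtain ⟨s, hs, hsx⟩ := hx q hq hS
    exact ⟨s, hs, by rw [smul_comm, hsx, smul_zero]⟩

omit [IsNoetherianRing R] in
theorem associatedPrimes_submodule_subset (N : Submodule R M) :
    associatedPrimes R N ⊆ associatedPrimes R M :=
  associatedPrimes.subset_of_injective N.subtype_injective

theorem le_supportedPart_iff {S : Set (Ideal R)} (hS : IsUpperSet S) {N : Submodule R M} :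
    N ≤ supportedPart M S ↔ associatedPrimes R N ⊆ S := by
  constructor
  · intro h q hq
    by_contra hqS
    obtain ⟨_, ⟨m, hm⟩, hqm⟩ := isAssociatedPrime_iff.1 hq
    obtain ⟨s, hs, hsm⟩ := h hm q (associatedPrimes_submodule_subset N hq) hqS
    apply hs
    rw [hqm, Submodule.mem_colon_singleton, Submodule.mem_bot]
    exact Subtype.ext hsm
  · intro h m hm q hq hqS
    by_contra! hcon
    have := hq.1
    obtain ⟨q₀, hq₀, hle, -⟩ := exists_associatedPrime_le_of_annihilator_le N hm q
      fun s hs => by_contra fun hsq => hcon s hsq hs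
    exact hqS (hS hle (h hq₀))

theorem associatedPrimes_supportedPart {S : Set (Ideal R)} (hS : IsUpperSet S) :
    associatedPrimes R (supportedPart M S) = associatedPrimes R M ∩ S := by
  apply Set.Subset.antisymm
  · exact Set.subset_inter (associatedPrimes_submodule_subset _)
      ((le_supportedPart_iff hS).1 le_rfl)
  · rintro q ⟨hq, hqS⟩
    obtain ⟨hp, m, hqm⟩ := isAssociatedPrime_iff.1 hq
    have hm : m ∈ supportedPart M S := by
      intro q' hq' hq'S
      by_contra! hcon
      refine hq'S (hS (fun s hs => ?_) hqS)
      by_contra hsq'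
      rw [hqm, Submodule.mem_colon_singleton, Submodule.mem_bot] at hs
      exact hcon s hsq' hs
    refine isAssociatedPrime_iff.2 ⟨hp, ⟨m, hm⟩, ?_⟩
    ext s
    rw [hqm, Submodule.mem_colon_singleton, Submodule.mem_colon_singleton, Submodule.mem_bot,
      Submodule.mem_bot, ← Subtype.coe_inj]
    rfl

/-- Associated primes of the quotient by the supported part lie outside `S`. -/
theorem notMem_of_mem_associatedPrimes_quotient_supportedPart {S : Set (Ideal R)}
    (hS : IsUpperSet S) {q : Ideal R}
    (hq : q ∈ associatedPrimes R (M ⧸ supportedPart M S)) : q ∉ S := by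
  intro hqS
  obtain ⟨hp, x, hqx⟩ := isAssociatedPrime_iff.1 hq
  obtain ⟨m, rfl⟩ := Submodule.Quotient.mk_surjective _ x
  have hmem : m ∈ supportedPart M S := by
    intro q' hq' hq'S
    by_contra! hcon
    have := hq'.1
    apply hq'S
    refine hS (fun s hs => ?_) hqS
    rw [hqx, Submodule.mem_colon_singleton, Submodule.mem_bot, ← Submodule.Quotient.mk_smul,
      Submodule.Quotient.mk_eq_zero] at hs
    obtain ⟨t, ht, hts⟩ := hs q' hq' hq'S
    by_contra hsq
    exact hcon (t * s) (fun h => (this.mem_or_mem h).elim ht hsq)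
      (by rw [mul_smul, hts])
  rw [(Submodule.Quotient.mk_eq_zero _).2 hmem] at hqx
  apply hp.ne_top
  rw [hqx, eq_top_iff]
  intro r _
  simp

theorem mem_associatedPrimes_quotient_supportedPart {S S' : Set (Ideal R)}
    (hS : IsUpperSet S) (hS' : IsUpperSet S') {q : Ideal R}
    (hq : q ∈ associatedPrimes R M) (hqS : q ∈ S) (hqS' : q ∉ S') :
    q ∈ associatedPrimes R (supportedPart M S ⧸
      (supportedPart M S').comap (supportedPart M S).subtype) := by
  have h1 : q ∈ associatedPrimes R (supportedPart M S) := by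
    rw [associatedPrimes_supportedPart hS]; exact ⟨hq, hqS⟩
  set K := (supportedPart M S').comap (supportedPart M S).subtype
  rcases associatedPrimes.subset_union_of_exact K.subtype_injective
    (LinearMap.exact_subtype_mkQ K) h1 with h | h
  · exfalso
    apply hqS'
    let f : K →ₗ[R] supportedPart M S' :=
      ((supportedPart M S).subtype.comp K.subtype).codRestrict _ fun x => x.2
    have hf : Function.Injective f := by
      intro x y hxy
      have h := congrArg Subtype.val hxy
      exact Subtype.ext (Subtype.ext h)
    have := associatedPrimes.subset_of_injective hf h
    rw [associatedPrimes_supportedPart hS'] at this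
    exact this.2
  · exact h

end AssociatedPrimes

section DimensionFiltration

variable {R : Type*} [CommRing R] [IsNoetherianRing R] {M : Type*} [AddCommGroup M] [Module R M]

theorem supportDim_le_iff [Module.Finite R M] {d : WithBot ℕ∞} :
    Module.supportDim R M ≤ d ↔ ∀ p ∈ associatedPrimes R M, ringKrullDim (R ⧸ p) ≤ d := by
  constructor
  · intro h p hp
    obtain ⟨-, f, hf⟩ := isAssociatedPrime_iff_exists_injective_linearMap p M |>.1 hp
    rw [← Module.supportDim_quotient_eq_ringKrullDim]
    exact (Module.supportDim_le_of_injective f hf).trans h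
  · intro h
    refine iSup_le fun s => ?_
    obtain ⟨q, hq, hle⟩ := Ideal.exists_minimalPrimes_le
      (Module.mem_support_iff_of_finite.1 s.head.2)
    refine le_trans ?_ (h q
      (Module.associatedPrimes.minimalPrimes_annihilator_subset_associatedPrimes R M hq))
    rw [← Module.supportDim_quotient_eq_ringKrullDim]
    have hmem (i) : (s i).1 ∈ Module.support R (R ⧸ q) := by
      rw [Module.mem_support_iff_of_finite, Ideal.annihilator_quotient]
      exact hle.trans (s.head_le i)
    let t : LTSeries (Module.support R (R ⧸ q)) :=
      { length := s.length
        toFun i := ⟨(s i).1, hmem i⟩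
        step i := s.step i }
    exact le_iSup (fun t : LTSeries (Module.support R (R ⧸ q)) => (t.length : WithBot ℕ∞)) t

theorem moduleDim_eq_supportDim (R : Type*) [CommRing R] (M : Type*) [AddCommGroup M] [Module R M]
    [Module.Finite R M] : moduleDim R M = Module.supportDim R M :=
  (Module.supportDim_eq_ringKrullDim_quotient_annihilator R M).symm

theorem exists_associatedPrime_ringKrullDim_eq [Module.Finite R M] [Nontrivial M] :
    ∃ p ∈ associatedPrimes R M, ringKrullDim (R ⧸ p) = Module.supportDim R M := by
  obtain ⟨p, hp, hmax⟩ := Set.exists_max_image (associatedPrimes R M)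
    (fun p => ringKrullDim (R ⧸ p)) (associatedPrimes.finite R M) (associatedPrimes.nonempty R M)
  exact ⟨p, hp, le_antisymm (supportDim_le_iff.1 le_rfl p hp) (supportDim_le_iff.2 hmax)⟩

/-- The ideals `p` with `ringKrullDim (R ⧸ p) ≤ d`. -/
def dimLeSet (R : Type*) [CommRing R] (d : WithBot ℕ∞) : Set (Ideal R) :=
  {p | ringKrullDim (R ⧸ p) ≤ d}

/-- The ideals with `ringKrullDim (R ⧸ p) < d`. -/
def dimLtSet (R : Type*) [CommRing R] (d : WithBot ℕ∞) : Set (Ideal R) :=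
  {p | ringKrullDim (R ⧸ p) < d}

omit [IsNoetherianRing R] in
theorem mem_dimLeSet {d : WithBot ℕ∞} {p : Ideal R} :
    p ∈ dimLeSet R d ↔ ringKrullDim (R ⧸ p) ≤ d :=
  Iff.rfl

omit [IsNoetherianRing R] in
theorem mem_dimLtSet {d : WithBot ℕ∞} {p : Ideal R} :
    p ∈ dimLtSet R d ↔ ringKrullDim (R ⧸ p) < d :=
  Iff.rfl

omit [IsNoetherianRing R] in
theorem ringKrullDim_quotient_anti {p q : Ideal R} (h : p ≤ q) :
    ringKrullDim (R ⧸ q) ≤ ringKrullDim (R ⧸ p) :=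
  ringKrullDim_le_of_surjective (Ideal.Quotient.factor h) (Ideal.Quotient.factor_surjective h)

omit [IsNoetherianRing R] in
theorem isUpperSet_dimLeSet (d : WithBot ℕ∞) : IsUpperSet (dimLeSet R d) :=
  fun _ _ h hp => (ringKrullDim_quotient_anti h).trans hp

omit [IsNoetherianRing R] in
theorem isUpperSet_dimLtSet (d : WithBot ℕ∞) : IsUpperSet (dimLtSet R d) :=
  fun _ _ h hp => (ringKrullDim_quotient_anti h).trans_lt hp

theorem le_supportedPart_dimLeSet_iff [Module.Finite R M] {d : WithBot ℕ∞} {N : Submodule R M} :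
    N ≤ supportedPart M (dimLeSet R d) ↔ moduleDim R N ≤ d := by
  rw [le_supportedPart_iff (isUpperSet_dimLeSet d), moduleDim_eq_supportDim, supportDim_le_iff]
  rfl

theorem le_supportedPart_dimLtSet_iff [Module.Finite R M] {d : WithBot ℕ∞} {N : Submodule R M}
    (hN : N ≠ ⊥) :
    N ≤ supportedPart M (dimLtSet R d) ↔ moduleDim R N < d := by
  rw [le_supportedPart_iff (isUpperSet_dimLtSet d), moduleDim_eq_supportDim]
  have : Nontrivial N := Submodule.nontrivial_iff_ne_bot.2 hN
  obtain ⟨p, hp, hpd⟩ := exists_associatedPrime_ringKrullDim_eq (R := R) (M := N)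
  refine ⟨fun h => hpd ▸ h hp, fun h q hq => ?_⟩
  exact (supportDim_le_iff.1 le_rfl q hq).trans_lt h

omit [IsNoetherianRing R] in
theorem supportedPart_dimLtSet_le (d : WithBot ℕ∞) :
    supportedPart M (dimLtSet R d) ≤ supportedPart M (dimLeSet R d) :=
  fun _ hm q hq hqS => hm q hq fun h => hqS (mem_dimLeSet.2 (le_of_lt (mem_dimLtSet.1 h)))

theorem IsDimFiltration.condition_supportedPart [Module.Finite R M]
    {C : Submodule R M → Submodule R M → Prop}
    (hC : ∀ N, C N N) {ℓ : ℕ} {D : Fin (ℓ + 1) → Submodule R M} (hD : IsDimFiltration R M ℓ D)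
    (h : ∀ i : Fin ℓ, C (D i.succ) (D i.castSucc)) (d : WithBot ℕ∞) :
    C (supportedPart M (dimLeSet R d)) (supportedPart M (dimLtSet R d)) := by
  obtain ⟨h0, -, hmono, hgr, hmem⟩ := hD
  set T := supportedPart M (dimLeSet R d) with hT
  set T' := supportedPart M (dimLtSet R d) with hT'
  have hT'T : T' ≤ T := supportedPart_dimLtSet_le d
  by_cases heq : T = T'
  · rw [← heq]; exact hC T
  have hTne : T ≠ ⊥ := by
    rintro hbot
    exact heq (le_antisymm (hbot ▸ bot_le) hT'T)
  have hdim : moduleDim R T = d := by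
    refine le_antisymm (le_supportedPart_dimLeSet_iff.1 le_rfl) (not_lt.1 fun hlt => ?_)
    exact heq (le_antisymm ((le_supportedPart_dimLtSet_iff hTne).2 hlt) hT'T)
  obtain ⟨i, hi⟩ := hmem T hTne ⟨le_refl (moduleDim R _), fun N hN => by
    rw [Set.mem_ofPred_eq, hdim] at hN
    exact le_supportedPart_dimLeSet_iff.2 hN⟩
  obtain ⟨j, rfl⟩ : ∃ j : Fin ℓ, j.succ = i := Fin.exists_succ_eq.2 (by
    rintro rfl
    exact hTne (hi ▸ h0))
  have hlt : D j.castSucc < D j.succ := hmono (Fin.castSucc_lt_succ)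
  have hDj : D j.castSucc ≤ T' := by
    by_cases hbot : D j.castSucc = ⊥
    · rw [hbot]; exact bot_le
    rw [hT', le_supportedPart_dimLtSet_iff hbot]
    refine lt_of_le_of_ne (le_supportedPart_dimLeSet_iff.1 (hlt.le.trans hi.le)) fun hd => ?_
    have hj0 : j.castSucc ≠ 0 := fun h => hbot (h ▸ h0)
    have : NeZero ℓ := ⟨fun h => (h ▸ j).elim0⟩
    obtain ⟨k, hk⟩ := Fin.exists_succ_eq.2 hj0
    have := (hgr k).2 (show D j.succ ∈ _ by
      rw [Set.mem_ofPred_eq, hk, hd, hi, hdim])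
    rw [hk] at this
    exact absurd hlt this.not_gt
  have hT'D : T' ≤ D j.castSucc := by
    by_cases hbot : T' = ⊥
    · rw [hbot]; exact bot_le
    have hlt' := (le_supportedPart_dimLtSet_iff hbot).1 hT'.le
    obtain ⟨k, hk⟩ := hmem T' hbot ⟨le_refl (moduleDim R _), fun N hN => by
      by_cases hN0 : N = ⊥
      · rw [hN0]; exact bot_le
      exact (le_supportedPart_dimLtSet_iff hN0).2 (lt_of_le_of_lt hN hlt')⟩
    have hkj : k < j.succ := by
      rw [← hmono.lt_iff_lt, hk, hi]
      exact lt_of_le_of_ne hT'T (Ne.symm heq)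
    rw [← hk]
    exact hmono.monotone (Fin.le_castSucc_iff.2 hkj)
  rw [← hi, ← le_antisymm hDj hT'D]
  exact h j

theorem exists_isDimFiltration_condition [Module.Finite R M]
    {C : Submodule R M → Submodule R M → Prop}
    (h : ∀ d, C (supportedPart M (dimLeSet R d)) (supportedPart M (dimLtSet R d))) :
    ∃ (ℓ : ℕ) (D : Fin (ℓ + 1) → Submodule R M), IsDimFiltration R M ℓ D ∧
      ∀ i : Fin ℓ, C (D i.succ) (D i.castSucc) := by
  classical
  let F : Finset (WithBot ℕ∞) := insert ⊥
    ((associatedPrimes.finite R M).toFinset.image fun p => ringKrullDim (R ⧸ p))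
  have hFdim {p : Ideal R} (hp : p ∈ associatedPrimes R M) : ringKrullDim (R ⧸ p) ∈ F :=
    Finset.mem_insert_of_mem (Finset.mem_image_of_mem _ (by simpa using hp))
  have hFcard : F.card = (F.card - 1) + 1 :=
    (Nat.sub_add_cancel (Finset.card_pos.2 ⟨⊥, Finset.mem_insert_self _ _⟩)).symm
  let e : Fin (F.card - 1 + 1) ↪o WithBot ℕ∞ := F.orderEmbOfFin hFcard
  have he {x} : x ∈ F ↔ ∃ i, e i = x := by
    rw [← Finset.mem_coe, ← Finset.range_orderEmbOfFin F hFcard]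
    rfl
  let T (d : WithBot ℕ∞) : Submodule R M := supportedPart M (dimLeSet R d)
  have hTmono {d d' : WithBot ℕ∞} (hd : d ≤ d') : T d ≤ T d' :=
    fun m hm q hq hqS => hm q hq fun h => hqS (h.trans hd)
  refine ⟨F.card - 1, fun i => T (e i), ⟨?_, ?_, ?_, ?_, ?_⟩, ?_⟩
  · obtain ⟨i, hi⟩ := he.1 (Finset.mem_insert_self _ _ : ⊥ ∈ F)
    have h0 : e 0 = ⊥ := le_bot_iff.1 (hi ▸ e.monotone (Fin.zero_le i))
    have hle : moduleDim R (T (e 0)) ≤ ⊥ := le_supportedPart_dimLeSet_iff.1 (by simp [T, h0])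
    rw [le_bot_iff, moduleDim_eq_supportDim, Module.supportDim_eq_bot_iff_subsingleton] at hle
    exact Submodule.subsingleton_iff_eq_bot.1 hle
  · rw [eq_top_iff, le_supportedPart_iff (isUpperSet_dimLeSet _)]
    intro q hq
    obtain ⟨i, hi⟩ := he.1 (hFdim (associatedPrimes_submodule_subset _ hq))
    rw [mem_dimLeSet, ← hi]
    exact e.monotone (Fin.le_last i)
  · intro i j hij
    refine lt_of_le_of_ne (hTmono (e.monotone hij.le)) fun heq => ?_
    have hlt : e i < e j := e.strictMono hij
    rcases Finset.mem_insert.1 (he.2 ⟨j, rfl⟩) with hj | hj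
    · exact not_lt_bot (hj ▸ hlt)
    · obtain ⟨q, hq, hqj⟩ := Finset.mem_image.1 hj
      rw [Set.Finite.mem_toFinset] at hq
      have h1 : q ∈ associatedPrimes R (T (e j)) := by
        rw [associatedPrimes_supportedPart (isUpperSet_dimLeSet _)]
        exact ⟨hq, hqj.le⟩
      rw [← show T (e i) = T (e j) from heq,
        associatedPrimes_supportedPart (isUpperSet_dimLeSet _)] at h1
      exact absurd hlt (not_lt.2 (hqj ▸ h1.2))
  · exact fun i => ⟨le_refl (moduleDim R _), fun N hN => le_supportedPart_dimLeSet_iff.2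
      (le_trans hN (le_supportedPart_dimLeSet_iff.1 le_rfl))⟩
  · intro N hN hgr
    have : Nontrivial N := Submodule.nontrivial_iff_ne_bot.2 hN
    obtain ⟨p, hp, hpd⟩ := exists_associatedPrime_ringKrullDim_eq (R := R) (M := N)
    obtain ⟨i, hi⟩ := he.1 (hFdim (associatedPrimes_submodule_subset _ hp))
    refine ⟨i, le_antisymm (hgr.2 ?_) ?_⟩
    · rw [Set.mem_ofPred_eq, moduleDim_eq_supportDim R N, ← hpd, ← hi]
      exact le_supportedPart_dimLeSet_iff.1 le_rfl
    · rw [le_supportedPart_dimLeSet_iff, moduleDim_eq_supportDim, ← hpd, hi]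
  · intro i
    have heq : T (e i.castSucc) = supportedPart M (dimLtSet R (e i.succ)) := by
      apply le_antisymm
      · intro m hm q hq hqS
        refine hm q hq fun hd => hqS ?_
        exact mem_dimLtSet.2 <|
          lt_of_le_of_lt (mem_dimLeSet.1 hd) (e.strictMono Fin.castSucc_lt_succ)
      · intro m hm q hq hqS
        refine hm q hq fun h => hqS ?_
        obtain ⟨k, hk⟩ := he.1 (hFdim hq)
        change ringKrullDim (R ⧸ q) < e i.succ at h
        rw [← hk, e.lt_iff_lt] at h
        change ringKrullDim (R ⧸ q) ≤ e i.castSucc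
        rw [← hk, e.le_iff_le]
        exact Fin.le_castSucc_iff.2 h
    simp only [heq]
    exact h _

end DimensionFiltration

section LocalCohenMacaulay

open RingTheory.Sequence CategoryTheory CategoryTheory.Abelian
open scoped Pointwise

universe u v

/-- `M` admits a regular sequence of length `n` in the maximal ideal. -/
def HasRegularSequence (A : Type*) [CommRing A] [IsLocalRing A] (M : Type*) [AddCommGroup M]
    [Module A M] (n : ℕ) : Prop :=
  ∃ rs : List A, rs.length = n ∧ (∀ r ∈ rs, r ∈ maximalIdeal A) ∧ IsRegular M rs

variable {A : Type u} [CommRing A] [IsLocalRing A] {M : Type v} [AddCommGroup M] [Module A M]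

theorem HasRegularSequence.cons {x : A} (hx : x ∈ maximalIdeal A) (hreg : IsSMulRegular M x) {n : ℕ}
    (h : HasRegularSequence A (QuotSMulTop x M) n) : HasRegularSequence A M (n + 1) := by
  obtain ⟨rs, hlen, hrs, hr⟩ := h
  exact ⟨x :: rs, by simp [hlen], List.forall_mem_cons.2 ⟨hx, hrs⟩, IsRegular.cons hreg hr⟩

theorem HasRegularSequence.congr {N : Type*} [AddCommGroup N] [Module A N] (e : M ≃ₗ[A] N) {n : ℕ}
    (h : HasRegularSequence A M n) : HasRegularSequence A N n := by
  obtain ⟨rs, hlen, hrs, hr⟩ := h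
  exact ⟨rs, hlen, hrs, (e.isRegular_congr rs).1 hr⟩

theorem IsCMModule.congr {N : Type*} [AddCommGroup N] [Module A N] (e : M ≃ₗ[A] N)
    (h : IsCMModule A M) : IsCMModule A N := by
  intro hN
  have h1 := h e.toEquiv.nontrivial
  have h2 : moduleDepth A M = moduleDepth A N := by
    unfold moduleDepth
    simp only [e.isRegular_congr]
  have h3 : moduleDim A M = moduleDim A N := by
    unfold moduleDim
    rw [e.annihilator_eq]
  rw [← h2, ← h3, h1]

variable [IsNoetherianRing A] [Module.Finite A M]

omit [IsNoetherianRing A] in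
theorem maximalIdeal_smul_top_lt [Nontrivial M] : maximalIdeal A • (⊤ : Submodule A M) < ⊤ :=
  (Submodule.top_ne_ideal_smul_of_le_jacobson_annihilator
    (IsLocalRing.maximalIdeal_le_jacobson _)).symm.lt_top

omit [IsNoetherianRing A] in
theorem nontrivial_quotSMulTop [Nontrivial M] {x : A} (hx : x ∈ maximalIdeal A) :
    Nontrivial (QuotSMulTop x M) := by
  rw [Submodule.Quotient.nontrivial_iff, ← Submodule.ideal_span_singleton_smul]
  exact ((Submodule.smul_mono_left ((Ideal.span_singleton_le_iff_mem _).2 hx)).trans_lt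
    maximalIdeal_smul_top_lt).ne

theorem HasRegularSequence.quotSMulTop [Small.{v} A] {n : ℕ} (h : HasRegularSequence A M (n + 1))
    {x : A} (hx : x ∈ maximalIdeal A) (hreg : IsSMulRegular M x) :
    HasRegularSequence A (QuotSMulTop x M) n := by
  obtain ⟨rs, hlen, hrs, hr⟩ := h
  have hM : Nontrivial M := hr.nontrivial
  have hMx : Nontrivial (QuotSMulTop x M) := nontrivial_quotSMulTop hx
  let K : ModuleCat.{v} A := ModuleCat.of A (Shrink.{v} (A ⧸ maximalIdeal A))
  have : Module.Finite A K :=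
    Module.Finite.equiv (Shrink.linearEquiv A (A ⧸ maximalIdeal A)).symm
  have hK : Module.support A K = PrimeSpectrum.zeroLocus (maximalIdeal A) := by
    rw [(Shrink.linearEquiv A _).support_eq, Module.support_eq_zeroLocus,
      Ideal.annihilator_quotient]
  have hext := ModuleCat.subsingleton_ext_of_exists_isRegular (maximalIdeal A) K hK.subset
    (ModuleCat.of A M) maximalIdeal_smul_top_lt rs hrs hr
  obtain ⟨rs', h1, h2, h3⟩ := ModuleCat.exists_isRegular_of_exists_subsingleton_ext
    (maximalIdeal A) n (ModuleCat.of A (QuotSMulTop x M)) maximalIdeal_smul_top_lt K hK (by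
      intro i hi
      have zero1 := AddCommGrpCat.isZero_of_iff_subsingleton.mpr (hext i (by omega))
      have zero2 := AddCommGrpCat.isZero_of_iff_subsingleton.mpr (hext (i + 1) (by omega))
      exact AddCommGrpCat.subsingleton_of_isZero <| ShortComplex.Exact.isZero_of_both_zeros
        ((Ext.covariant_sequence_exact₃' K
          (IsSMulRegular.smulShortComplex_shortExact (M := ModuleCat.of A M) hreg)) i (i + 1) rfl)
        (zero1.eq_zero_of_src _) (zero2.eq_zero_of_tgt _))
  exact ⟨rs', h1, h2, h3⟩

theorem exists_associatedPrime_quotSMulTop {x : A} (hx : x ∈ maximalIdeal A)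
    (hreg : IsSMulRegular M x) {p : Ideal A} (hp : p ∈ associatedPrimes A M) :
    ∃ q ∈ associatedPrimes A (QuotSMulTop x M), p < q := by
  have := hp.1
  obtain ⟨-, m, hm⟩ := isAssociatedPrime_iff.1 hp
  let U : Submodule A M := Submodule.torsionBySet A M p
  have hU {u : M} : u ∈ U ↔ ∀ a ∈ p, a • u = 0 := by
    simp [U, Submodule.mem_torsionBySet_iff]
  have hmem (a : A) : a ∈ p ↔ a • m = 0 := by
    rw [hm, Submodule.mem_colon_singleton, Submodule.mem_bot]
  have hxp : x ∉ p := by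
    intro h
    rw [hmem] at h
    have hm0 : m = 0 := hreg (by simpa using h)
    exact this.ne_top (eq_top_iff.2 fun a _ => (hmem a).2 (by simp [hm0]))
  obtain ⟨u, huU, hux⟩ : ∃ u ∈ U, u ∉ x • (⊤ : Submodule A M) := by
    by_contra! hcon
    have hle : U ≤ Ideal.span {x} • U := by
      intro u hu
      obtain ⟨v, -, hv⟩ := (Submodule.mem_smul_pointwise_iff_exists _ _ _).1 (hcon u hu)
      rw [Submodule.ideal_span_singleton_smul, ← hv]
      refine Submodule.smul_mem_pointwise_smul _ _ _ (hU.2 fun a ha => hreg ?_)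
      have := hU.1 hu a ha
      simp only [smul_zero]
      rw [smul_comm, hv, this]
    have hbot : U = ⊥ := Submodule.eq_bot_of_le_smul_of_le_jacobson_bot _ U
      (IsNoetherian.noetherian U) hle (by
        rw [IsLocalRing.jacobson_eq_maximalIdeal ⊥ bot_ne_top]
        exact (Ideal.span_singleton_le_iff_mem _).2 hx)
    have hmU : m ∈ U := hU.2 fun a ha => (hmem a).1 ha
    rw [hbot, Submodule.mem_bot] at hmU
    exact this.ne_top (eq_top_iff.2 fun a _ => (hmem a).2 (by simp [hmU]))
  let w : QuotSMulTop x M := Submodule.Quotient.mk u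
  have hw : w ≠ 0 := fun h => hux ((Submodule.Quotient.mk_eq_zero _).1 h)
  obtain ⟨q, hq, hle⟩ := exists_le_isAssociatedPrime_of_isNoetherianRing A w hw
  have hann (a : A) (ha : a • w = 0) : a ∈ q :=
    hle (by rwa [Submodule.mem_colon_singleton, Submodule.mem_bot])
  refine ⟨q, hq, lt_of_le_of_ne (fun a ha => hann a ?_) ?_⟩
  · change (Submodule.Quotient.mk (a • u) : QuotSMulTop x M) = 0
    rw [hU.1 huU a ha]
    rfl
  · rintro rfl
    apply hxp
    apply hann
    exact (Submodule.Quotient.mk_eq_zero _).2 (Submodule.smul_mem_pointwise_smul _ _ _ trivial)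

theorem ringKrullDim_quotient_add_one_le {R : Type*} [CommRing R] {p q : Ideal R} [p.IsPrime]
    (h : p < q) : ringKrullDim (R ⧸ q) + 1 ≤ ringKrullDim (R ⧸ p) := by
  obtain ⟨x, hxq, hxp⟩ := SetLike.exists_of_lt h
  have hx : Ideal.Quotient.mk p x ∈ nonZeroDivisors (R ⧸ p) :=
    mem_nonZeroDivisors_of_ne_zero fun h0 => hxp (Ideal.Quotient.eq_zero_iff_mem.1 h0)
  refine le_trans ?_ (ringKrullDim_quotient_succ_le_of_nonZeroDivisor hx)
  gcongr
  refine ringKrullDim_le_of_surjective (Ideal.Quotient.lift _ (Ideal.Quotient.factor h.le) ?_) ?_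
  · intro a ha
    obtain ⟨b, rfl⟩ := Ideal.mem_span_singleton.1 ha
    rw [map_mul, Ideal.Quotient.factor_mk, Ideal.Quotient.eq_zero_iff_mem.2 hxq, zero_mul]
  · exact Ideal.Quotient.lift_surjective_of_surjective _ _ (Ideal.Quotient.factor_surjective h.le)

theorem HasRegularSequence.le_ringKrullDim_quotient {n : ℕ} (h : HasRegularSequence A M n)
    {p : Ideal A} (hp : p ∈ associatedPrimes A M) : (n : WithBot ℕ∞) ≤ ringKrullDim (A ⧸ p) := by
  obtain ⟨rs, rfl, hrs, hr⟩ := h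
  induction rs generalizing M p with
  | nil =>
    have := hp.1
    simpa using ringKrullDim_nonneg_of_nontrivial
  | cons x rs ih =>
    rw [isRegular_cons_iff] at hr
    have := hp.1
    obtain ⟨q, hq, hlt⟩ := exists_associatedPrime_quotSMulTop (hrs x (by simp)) hr.1 hp
    have := ih hq (fun r hr => hrs r (by simp [hr])) hr.2
    refine le_trans ?_ (ringKrullDim_quotient_add_one_le hlt)
    push_cast [List.length_cons]
    gcongr

theorem HasRegularSequence.le_supportDim {n : ℕ} (h : HasRegularSequence A M n) :
    (n : WithBot ℕ∞) ≤ Module.supportDim A M := by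
  obtain ⟨rs, rfl, hrs, hr⟩ := h
  have : Nontrivial M := hr.nontrivial
  obtain ⟨p, hp⟩ := associatedPrimes.nonempty A M
  exact (HasRegularSequence.le_ringKrullDim_quotient ⟨rs, rfl, hrs, hr⟩ hp).trans
    (supportDim_le_iff.1 le_rfl p hp)

theorem exists_natCast_eq_ringKrullDim_quotient (I : Ideal A) (hI : I ≠ ⊤) :
    ∃ n : ℕ, ringKrullDim (A ⧸ I) = n := by
  have : Nontrivial (A ⧸ I) := Ideal.Quotient.nontrivial_iff.2 hI
  have : IsLocalRing (A ⧸ I) :=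
    IsLocalRing.of_surjective' (Ideal.Quotient.mk I) Ideal.Quotient.mk_surjective
  have h1 := ringKrullDim_nonneg_of_nontrivial (R := A ⧸ I)
  have h2 := ringKrullDim_lt_top (R := A ⧸ I)
  generalize ringKrullDim (A ⧸ I) = d at h1 h2
  cases d with
  | bot => simp at h1
  | coe d =>
    cases d with
    | top => simp at h2
    | coe d => exact ⟨d, rfl⟩

theorem exists_natCast_eq_supportDim [Nontrivial M] : ∃ n : ℕ, Module.supportDim A M = n := by
  rw [Module.supportDim_eq_ringKrullDim_quotient_annihilator]
  refine exists_natCast_eq_ringKrullDim_quotient _ ?_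
  rw [Ne, Module.annihilator_eq_top_iff]
  exact not_subsingleton M

/-- Over a Noetherian local ring, a nonzero finite module is Cohen-Macaulay if and only if it has
a regular sequence whose length is the dimension of the module. -/
theorem isCMModule_iff [Nontrivial M] :
    IsCMModule A M ↔ ∃ n : ℕ, HasRegularSequence A M n ∧ Module.supportDim A M = n := by
  have hset : moduleDepth A M = ⨆ k : {k : ℕ // HasRegularSequence A M k}, (k.1 : ℕ∞) := by
    unfold moduleDepth
    rw [iSup]
    congr 1
    ext k
    constructor
    · rintro ⟨rs, rfl, h1, h2⟩
      exact ⟨⟨_, rs, rfl, h1, h2⟩, rfl⟩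
    · rintro ⟨⟨_, rs, rfl, h1, h2⟩, rfl⟩
      exact ⟨rs, rfl, h1, h2⟩
  obtain ⟨n, hn⟩ := exists_natCast_eq_supportDim (A := A) (M := M)
  have hle {k : ℕ} (hk : HasRegularSequence A M k) : k ≤ n := by
    have := hk.le_supportDim
    rw [hn] at this
    exact_mod_cast this
  have hdim : IsCMModule A M ↔ moduleDepth A M = n := by
    unfold IsCMModule
    rw [moduleDim_eq_supportDim, hn]
    refine ⟨fun h => ?_, fun h _ => by rw [h]; rfl⟩
    exact_mod_cast h inferInstance
  rw [hdim, hset]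
  constructor
  · intro h
    refine ⟨n, ?_, hn⟩
    by_contra hcon
    have hlt {k : ℕ} (hk : HasRegularSequence A M k) : k + 1 ≤ n :=
      lt_of_le_of_ne (hle hk) fun h => hcon (h ▸ hk)
    have h0 : HasRegularSequence A M 0 := ⟨[], rfl, by simp, IsRegular.nil A M⟩
    have : ((n : ℕ) : ℕ∞) ≤ ((n - 1 : ℕ) : ℕ∞) := by
      rw [← h]
      exact iSup_le fun k => by
        have := hlt k.2
        exact_mod_cast Nat.le_sub_one_of_lt this
    have h1 := hlt h0
    have h2 : n ≤ n - 1 := by exact_mod_cast this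
    omega
  · rintro ⟨m, hm, hdim⟩
    obtain rfl : n = m := by
      rw [hn] at hdim
      exact_mod_cast hdim
    refine le_antisymm (iSup_le fun k => by exact_mod_cast hle k.2) ?_
    exact le_iSup (fun k : {k : ℕ // HasRegularSequence A M k} => (k.1 : ℕ∞)) ⟨n, hm⟩

theorem HasRegularSequence.ringKrullDim_quotient_eq {n : ℕ} (h : HasRegularSequence A M n)
    (hn : Module.supportDim A M = n) {p : Ideal A} (hp : p ∈ associatedPrimes A M) :
    ringKrullDim (A ⧸ p) = n :=
  le_antisymm (hn ▸ supportDim_le_iff.1 le_rfl p hp) (h.le_ringKrullDim_quotient hp)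

end LocalCohenMacaulay

section Localization

open scoped Pointwise

universe u v

theorem algebraMap_smul_localized_top {R : Type*} [CommRing R] (S : Submonoid R) (M : Type*)
    [AddCommGroup M] [Module R M] (x : R) :
    (x • (⊤ : Submodule R M)).localized S =
      algebraMap R (Localization S) x • (⊤ : Submodule (Localization S) (LocalizedModule S M)) := by
  rw [← Submodule.ideal_span_singleton_smul, ← Submodule.ideal_span_singleton_smul]
  refine (Submodule.localized'_smul (Localization S) S (LocalizedModule.mkLinearMap S M) ⊤
    (Ideal.span {x})).trans ?_
  rw [Submodule.localized'_top, Ideal.span, Submodule.localized'_span, Set.image_singleton]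
  rfl

/-- Localization commutes with the quotient by the multiples of a ring element. -/
noncomputable def localizedQuotSMulTopEquiv {R : Type*} [CommRing R] (S : Submonoid R) (M : Type*)
    [AddCommGroup M] [Module R M] (x : R) :
    LocalizedModule S (QuotSMulTop x M) ≃ₗ[Localization S]
      QuotSMulTop (algebraMap R (Localization S) x) (LocalizedModule S M) :=
  (localizedQuotientEquiv S (x • (⊤ : Submodule R M))).symm ≪≫ₗ
    Submodule.quotEquivOfEq _ _ (algebraMap_smul_localized_top S M x)

theorem LocalizedModule.mk_eq_zero_iff {R : Type*} [CommRing R] {M : Type*} [AddCommGroup M]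
    [Module R M] {S : Submonoid R} {m : M} {s : S} :
    LocalizedModule.mk m s = 0 ↔ ∃ t ∈ S, t • m = 0 := by
  rw [← LocalizedModule.zero_mk s, LocalizedModule.mk_eq]
  constructor
  · rintro ⟨t, ht⟩
    refine ⟨t * s, (t * s).2, ?_⟩
    simpa [Submonoid.smul_def, mul_smul] using ht
  · rintro ⟨t, htS, ht⟩
    refine ⟨⟨t, htS⟩, ?_⟩
    simp only [Submonoid.smul_def, smul_zero]
    rw [smul_comm, ht, smul_zero]

theorem LocalizedModule.isSMulRegular_of_le {R : Type*} [CommRing R] {M : Type*}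
    [AddCommGroup M] [Module R M] {S T : Submonoid R} (hST : S ≤ T) {x : R}
    (h : IsSMulRegular (LocalizedModule S M) (algebraMap R (Localization S) x)) :
    IsSMulRegular (LocalizedModule T M) (algebraMap R (Localization T) x) := by
  rw [isSMulRegular_iff_right_eq_zero_of_smul] at h ⊢
  intro y
  induction y using LocalizedModule.induction_on with | _ m s
  rw [algebraMap_smul, LocalizedModule.smul'_mk, LocalizedModule.mk_eq_zero_iff]
  rintro ⟨t, ht, htm⟩
  have := h (LocalizedModule.mk (t • m) 1) (by
    rw [algebraMap_smul, LocalizedModule.smul'_mk, smul_comm, htm, LocalizedModule.zero_mk])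
  obtain ⟨r, hr, hrm⟩ := (LocalizedModule.mk_eq_zero_iff).1 this
  exact (LocalizedModule.mk_eq_zero_iff).2 ⟨r * t, T.mul_mem (hST hr) ht, by rw [mul_smul, hrm]⟩

theorem comap_mem_associatedPrimes_localizedModule_iff {R : Type*} [CommRing R]
    [IsNoetherianRing R] (S : Submonoid R) {M : Type*} [AddCommGroup M] [Module R M]
    {p : Ideal (Localization S)} :
    p ∈ associatedPrimes (Localization S) (LocalizedModule S M) ↔
      p.comap (algebraMap R (Localization S)) ∈ associatedPrimes R M := by
  rw [← Module.associatedPrimes.preimage_comap_associatedPrimes_eq_associatedPrimes_of_isLocalizedModule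
    S (Localization S) (LocalizedModule.mkLinearMap S M)]
  rfl

section AtPrime

variable {R : Type u} [CommRing R] [IsNoetherianRing R] {M : Type v} [AddCommGroup M] [Module R M]

theorem map_mem_associatedPrimes_localizedModule {p P : Ideal R} [P.IsPrime] (hpP : p ≤ P)
    (hp : p ∈ associatedPrimes R M) :
    p.map (algebraMap R (Localization.AtPrime P)) ∈
      associatedPrimes (Localization.AtPrime P) (LocalizedModule P.primeCompl M) := by
  have := hp.1
  have h := Ideal.under_map_of_isLocalizationAtPrime P (S := Localization.AtPrime P) hpP
  rw [comap_mem_associatedPrimes_localizedModule_iff]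
  rwa [← Ideal.under_def, h]

omit [IsNoetherianRing R] in
theorem le_of_mem_associatedPrimes_localizedModule {P : Ideal R} [P.IsPrime]
    {p : Ideal (Localization.AtPrime P)}
    (hp : p ∈ associatedPrimes (Localization.AtPrime P) (LocalizedModule P.primeCompl M)) :
    p.comap (algebraMap R (Localization.AtPrime P)) ≤ P := by
  refine le_trans ?_ (Localization.AtPrime.under_maximalIdeal (I := P)).le
  exact Ideal.comap_mono (IsLocalRing.le_maximalIdeal hp.1.ne_top)

/-- Localizing at a smaller prime a module which is Cohen-Macaulay at a prime `Q` gives a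
Cohen-Macaulay module, and the dimensions are related by the dimension formula. -/
theorem exists_hasRegularSequence_localization [Module.Finite R M] {P Q : Ideal R} [P.IsPrime]
    [Q.IsPrime] (hPQ : P ≤ Q) [Nontrivial (LocalizedModule P.primeCompl M)] {n : ℕ}
    (h : HasRegularSequence (Localization.AtPrime Q) (LocalizedModule Q.primeCompl M) n)
    (hn : Module.supportDim (Localization.AtPrime Q) (LocalizedModule Q.primeCompl M) = n) :
    ∃ a b : ℕ, a + b = n ∧
      HasRegularSequence (Localization.AtPrime P) (LocalizedModule P.primeCompl M) a ∧
      Module.supportDim (Localization.AtPrime P) (LocalizedModule P.primeCompl M) = a ∧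
      ringKrullDim (Localization.AtPrime Q ⧸ P.map (algebraMap R (Localization.AtPrime Q))) = b := by
  induction n using Nat.strong_induction_on generalizing M with | _ n ih
  by_cases hreg : ∃ x ∈ P, IsSMulRegular (LocalizedModule Q.primeCompl M)
      (algebraMap R (Localization.AtPrime Q) x)
  · obtain ⟨x, hxP, hxQ⟩ := hreg
    have hxP' : IsSMulRegular (LocalizedModule P.primeCompl M)
        (algebraMap R (Localization.AtPrime P) x) :=
      LocalizedModule.isSMulRegular_of_le (fun s hs =>
        Ideal.mem_primeCompl_iff.2 fun hsP => Ideal.mem_primeCompl_iff.1 hs (hPQ hsP)) hxQ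
    have hmP : algebraMap R (Localization.AtPrime P) x ∈ maximalIdeal (Localization.AtPrime P) :=
      (IsLocalization.AtPrime.to_map_mem_maximal_iff _ P x).2 hxP
    have hmQ : algebraMap R (Localization.AtPrime Q) x ∈ maximalIdeal (Localization.AtPrime Q) :=
      (IsLocalization.AtPrime.to_map_mem_maximal_iff _ Q x).2 (hPQ hxP)
    have hMQ : Nontrivial (LocalizedModule Q.primeCompl M) := by
      obtain ⟨_, _, _, hr⟩ := h
      exact hr.nontrivial
    have hQ := nontrivial_quotSMulTop (M := LocalizedModule Q.primeCompl M) hmQ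
    have hP := nontrivial_quotSMulTop (M := LocalizedModule P.primeCompl M) hmP
    have hdimQ := Module.supportDim_quotSMulTop_succ_eq_supportDim hxQ hmQ
    have hdimP := Module.supportDim_quotSMulTop_succ_eq_supportDim hxP' hmP
    let eQ := localizedQuotSMulTopEquiv Q.primeCompl M x
    let eP := localizedQuotSMulTopEquiv P.primeCompl M x
    obtain ⟨k, hk⟩ := exists_natCast_eq_supportDim (A := Localization.AtPrime Q)
      (M := QuotSMulTop (algebraMap R (Localization.AtPrime Q) x) (LocalizedModule Q.primeCompl M))
    rw [hn, hk] at hdimQ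
    obtain rfl : k + 1 = n := by exact_mod_cast hdimQ
    have : Nontrivial (LocalizedModule P.primeCompl (QuotSMulTop x M)) := eP.toEquiv.nontrivial
    have : Small.{max u v} (Localization.AtPrime Q) := small_max.{v} _
    obtain ⟨a, b, hab, ha, hda, hb⟩ := ih k k.lt_succ_self (M := QuotSMulTop x M)
      ((h.quotSMulTop hmQ hxQ).congr eQ.symm) ((Module.supportDim_eq_of_equiv eQ).trans hk)
    refine ⟨a + 1, b, by omega, (ha.congr eP).cons hmP hxP', ?_, hb⟩
    rw [← hdimP, ← Module.supportDim_eq_of_equiv eP, hda]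
    rfl
  · push Not at hreg
    have key {p : Ideal R} (hp : p ∈ associatedPrimes R M) (hpP : p ≤ P) :
        p = P ∧ P.map (algebraMap R (Localization.AtPrime Q)) ∈
          associatedPrimes (Localization.AtPrime Q) (LocalizedModule Q.primeCompl M) := by
      have := hp.1
      have hpQ := map_mem_associatedPrimes_localizedModule (hpP.trans hPQ) hp
      obtain ⟨q, hq, hPq⟩ : ∃ q ∈ associatedPrimes (Localization.AtPrime Q)
          (LocalizedModule Q.primeCompl M),
          P ≤ q.comap (algebraMap R (Localization.AtPrime Q)) := by
        refine (Ideal.subset_union_prime_finite (associatedPrimes.finite _ _)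
          (f := Ideal.comap (algebraMap R (Localization.AtPrime Q))) ⊥ ⊥
          fun q hq _ _ => hq.1.comap _).1 fun x hx => ?_
        have hx' : algebraMap R (Localization.AtPrime Q) x ∈ ⋃ q ∈ associatedPrimes
            (Localization.AtPrime Q) (LocalizedModule Q.primeCompl M), (q : Set _) := by
          rw [biUnion_associatedPrimes_eq_compl_regular]
          exact hreg x hx
        simpa using hx'
      rw [← Ideal.map_le_iff_le_comap] at hPq
      have hle := (Ideal.map_mono hpP).trans hPq
      have heq : p.map (algebraMap R (Localization.AtPrime Q)) = q := by
        by_contra hne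
        have := hpQ.1
        have hlt := ringKrullDim_quotient_add_one_le (lt_of_le_of_ne hle hne)
        rw [h.ringKrullDim_quotient_eq hn hpQ, h.ringKrullDim_quotient_eq hn hq] at hlt
        have : n + 1 ≤ n := by exact_mod_cast hlt
        omega
      rw [← heq] at hPq
      have hmap := le_antisymm hPq (Ideal.map_mono hpP)
      refine ⟨?_, hmap ▸ hpQ⟩
      rw [← Ideal.under_map_of_isLocalizationAtPrime Q (S := Localization.AtPrime Q)
        (hpP.trans hPQ), ← hmap,
        Ideal.under_map_of_isLocalizationAtPrime Q (S := Localization.AtPrime Q) hPQ]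
    have hmax {p : Ideal (Localization.AtPrime P)} (hp : p ∈ associatedPrimes
        (Localization.AtPrime P) (LocalizedModule P.primeCompl M)) :=
      key (comap_mem_associatedPrimes_localizedModule_iff _ |>.1 hp)
        (le_of_mem_associatedPrimes_localizedModule hp)
    obtain ⟨p, hp⟩ := associatedPrimes.nonempty (Localization.AtPrime P)
      (LocalizedModule P.primeCompl M)
    refine ⟨0, n, by omega, ⟨[], rfl, by simp, RingTheory.Sequence.IsRegular.nil _ _⟩, ?_,
      h.ringKrullDim_quotient_eq hn (hmax hp).2⟩
    obtain ⟨k, hk⟩ := exists_natCast_eq_supportDim (A := Localization.AtPrime P)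
      (M := LocalizedModule P.primeCompl M)
    refine le_antisymm (supportDim_le_iff.2 fun q hq => ?_) (by rw [hk]; exact_mod_cast k.zero_le)
    rw [Localization.AtPrime.eq_maximalIdeal_iff_under_eq.1 (hmax hq).1]
    let := Ideal.Quotient.field (maximalIdeal (Localization.AtPrime P))
    rw [ringKrullDim_eq_zero_of_field]
    rfl

end AtPrime

end Localization

section LocalizationOfSupportedPart

theorem localized_comap_subtype {R : Type*} [CommRing R] (T : Submonoid R) {M : Type*}
    [AddCommGroup M] [Module R M] (N N' : Submodule R M) :
    (N'.comap N.subtype).localized' (Localization T) T (N.toLocalized T) =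
      (N'.localized T).comap (N.localized T).subtype := by
  have hval (m : N) (s : T) : (IsLocalizedModule.mk' (N.toLocalized T) m s).1 =
      IsLocalizedModule.mk' (LocalizedModule.mkLinearMap T M) m.1 s := by
    rw [← IsLocalizedModule.smul_inj (LocalizedModule.mkLinearMap T M) s,
      IsLocalizedModule.mk'_cancel']
    have := congrArg Subtype.val (IsLocalizedModule.mk'_cancel' (N.toLocalized T) m s)
    exact this
  ext y
  rw [Submodule.mem_localized', Submodule.mem_comap]
  constructor
  · rintro ⟨m, hm, s, rfl⟩
    exact ⟨m.1, hm, s, (hval m s).symm⟩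
  · intro hy
    obtain ⟨m, hm, s, hs⟩ := (Submodule.localized'_inf (Localization T) T
      (LocalizedModule.mkLinearMap T M) N N').ge ⟨y.2, hy⟩
    exact ⟨⟨m, hm.1⟩, hm.2, s, Subtype.ext ((hval _ _).trans hs)⟩

/-- Localization commutes with subquotients. -/
noncomputable def localizedSubquotientEquiv {R : Type*} [CommRing R] (T : Submonoid R) {M : Type*}
    [AddCommGroup M] [Module R M] (N N' : Submodule R M) :
    LocalizedModule T (N ⧸ N'.comap N.subtype) ≃ₗ[Localization T]
      (N.localized T ⧸ (N'.localized T).comap (N.localized T).subtype) :=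
  ((IsLocalizedModule.linearEquiv T (LocalizedModule.mkLinearMap T _)
    ((N'.comap N.subtype).toLocalizedQuotient' (Localization T) T
      (N.toLocalized T))).extendScalarsOfIsLocalization T (Localization T)) ≪≫ₗ
    Submodule.quotEquivOfEq _ _ (localized_comap_subtype T N N')

variable {R : Type*} [CommRing R] [IsNoetherianRing R] {M : Type*} [AddCommGroup M] [Module R M]
  {P : Ideal R} [P.IsPrime]

theorem localized_supportedPart {S : Set (Ideal R)} (hS : IsUpperSet S)
    {S' : Set (Ideal (Localization.AtPrime P))}
    (h : ∀ q ∈ associatedPrimes (Localization.AtPrime P) (LocalizedModule P.primeCompl M),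
      q ∈ S' ↔ q.comap (algebraMap R (Localization.AtPrime P)) ∈ S) :
    (supportedPart M S).localized P.primeCompl =
      supportedPart (LocalizedModule P.primeCompl M) S' := by
  ext x
  induction x using LocalizedModule.induction_on with | _ m s
  constructor
  · rintro ⟨m', hm', s', hx⟩
    rw [← hx, ← IsLocalizedModule.mk_eq_mk']
    intro q hq hqS
    rw [h q hq] at hqS
    obtain ⟨t, ht, htm⟩ := hm' _ (comap_mem_associatedPrimes_localizedModule_iff _ |>.1 hq) hqS
    refine ⟨algebraMap R _ t, ht, ?_⟩
    rw [algebraMap_smul, LocalizedModule.smul'_mk, htm, LocalizedModule.zero_mk]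
  · intro hx
    obtain ⟨t, ht, htm⟩ : ∃ t ∉ P, t • m ∈ supportedPart M S := by
      by_contra! hcon
      obtain ⟨q₀, hq₀, hq₀P, hann⟩ := exists_associatedPrime_le_of_annihilator_le
        (⊤ : Submodule R (M ⧸ supportedPart M S)) (m := Submodule.Quotient.mk m) trivial P
        fun t ht => by
          by_contra htP
          rw [← Submodule.Quotient.mk_smul, Submodule.Quotient.mk_eq_zero] at ht
          exact hcon t htP ht
      have hq₀S := notMem_of_mem_associatedPrimes_quotient_supportedPart hS
        (associatedPrimes_submodule_subset _ hq₀)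
      have := hq₀.1
      obtain ⟨q, hq, hqq₀, hannq⟩ := exists_associatedPrime_le_of_annihilator_le
        (⊤ : Submodule R M) (m := m) trivial q₀ fun t ht => hann t (by
          rw [← Submodule.Quotient.mk_smul, ht, Submodule.Quotient.mk_zero])
      replace hq := associatedPrimes_submodule_subset _ hq
      have := hq.1
      have hqP := hqq₀.trans hq₀P
      have hcomap : (q.map (algebraMap R (Localization.AtPrime P))).comap
          (algebraMap R (Localization.AtPrime P)) = q :=
        Ideal.under_map_of_isLocalizationAtPrime P hqP
      have hq' := map_mem_associatedPrimes_localizedModule hqP hq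
      obtain ⟨a, ha, hax⟩ := hx _ hq' fun hqS' => by
        rw [h _ hq', hcomap] at hqS'
        exact hq₀S (hS hqq₀ hqS')
      obtain ⟨r, u, rfl⟩ := IsLocalization.exists_mk'_eq P.primeCompl a
      have hrx : algebraMap R (Localization.AtPrime P) r • LocalizedModule.mk m s = 0 := by
        rw [← IsLocalization.mk'_spec (Localization.AtPrime P) r u, mul_comm, mul_smul, hax,
          smul_zero]
      rw [algebraMap_smul, LocalizedModule.smul'_mk] at hrx
      obtain ⟨t, ht, htr⟩ := LocalizedModule.mk_eq_zero_iff.1 hrx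
      rw [← mul_smul] at htr
      rcases this.mem_or_mem (hannq _ htr) with h1 | h1
      · exact Ideal.mem_primeCompl_iff.1 ht (hqP h1)
      · exact ha (IsLocalization.mk'_mem_iff.2 (Ideal.mem_map_of_mem _ h1))
    refine ⟨t • m, htm, ⟨t, Ideal.mem_primeCompl_iff.2 ht⟩ * s, ?_⟩
    rw [← IsLocalizedModule.mk_eq_mk']
    exact LocalizedModule.mk_cancel_common_left ⟨t, Ideal.mem_primeCompl_iff.2 ht⟩ s m

theorem isCMModule_localized_supportedPart_quotient_iff {S S₂ : Set (Ideal R)} (hS : IsUpperSet S)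
    (hS₂ : IsUpperSet S₂) {S' S₂' : Set (Ideal (Localization.AtPrime P))}
    (h : ∀ q ∈ associatedPrimes (Localization.AtPrime P) (LocalizedModule P.primeCompl M),
      q ∈ S' ↔ q.comap (algebraMap R (Localization.AtPrime P)) ∈ S)
    (h₂ : ∀ q ∈ associatedPrimes (Localization.AtPrime P) (LocalizedModule P.primeCompl M),
      q ∈ S₂' ↔ q.comap (algebraMap R (Localization.AtPrime P)) ∈ S₂) :
    IsCMModule (Localization.AtPrime P) (LocalizedModule P.primeCompl
      (supportedPart M S ⧸ (supportedPart M S₂).comap (supportedPart M S).subtype)) ↔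
    IsCMModule (Localization.AtPrime P) (supportedPart (LocalizedModule P.primeCompl M) S' ⧸
      (supportedPart (LocalizedModule P.primeCompl M) S₂').comap
        (supportedPart (LocalizedModule P.primeCompl M) S').subtype) := by
  rw [← localized_supportedPart hS h, ← localized_supportedPart hS₂ h₂]
  exact ⟨fun H => H.congr (localizedSubquotientEquiv P.primeCompl _ _),
    fun H => H.congr (localizedSubquotientEquiv P.primeCompl _ _).symm⟩

end LocalizationOfSupportedPart

section SequentiallyCohenMacaulay

/-- The quotient of the largest submodule of dimension at most `d` by the largest submodule of
dimension less than `d`. -/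
abbrev DimSubquotient (R : Type*) [CommRing R] (M : Type*) [AddCommGroup M] [Module R M]
    (d : WithBot ℕ∞) :=
  supportedPart M (dimLeSet R d) ⧸
    (supportedPart M (dimLtSet R d)).comap (supportedPart M (dimLeSet R d)).subtype

theorem subsingleton_quotient_comap_subtype_self {R : Type*} [CommRing R] {M : Type*}
    [AddCommGroup M] [Module R M] (N : Submodule R M) :
    Subsingleton (N ⧸ N.comap N.subtype) := by
  rw [Submodule.comap_subtype_self]
  infer_instance

theorem isSeqCM_iff {A : Type*} [CommRing A] [IsLocalRing A] [IsNoetherianRing A] {M : Type*}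
    [AddCommGroup M] [Module A M] [Module.Finite A M] :
    IsSeqCM A M ↔ ∀ d, IsCMModule A (DimSubquotient A M d) := by
  constructor
  · rintro ⟨ℓ, D, hD, h⟩
    exact hD.condition_supportedPart (C := fun N N' => IsCMModule A (N ⧸ N'.comap N.subtype))
      (fun N hN => (not_subsingleton _ (subsingleton_quotient_comap_subtype_self N)).elim) h
  · exact exists_isDimFiltration_condition
      (C := fun N N' => IsCMModule A (N ⧸ N'.comap N.subtype))

theorem isSeqCMGen_iff {R : Type*} [CommRing R] [IsNoetherianRing R] {M : Type*}
    [AddCommGroup M] [Module R M] [Module.Finite R M] :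
    IsSeqCMGen R M ↔ ∀ d, IsCMModuleGen R (DimSubquotient R M d) := by
  constructor
  · rintro ⟨ℓ, D, hD, h⟩
    refine hD.condition_supportedPart (C := fun N N' => IsCMModuleGen R (N ⧸ N'.comap N.subtype))
      (fun N P _ hN => ?_) h
    have := subsingleton_quotient_comap_subtype_self N
    exact (not_subsingleton _ (inferInstance : Subsingleton (LocalizedModule P.primeCompl
      (N ⧸ N.comap N.subtype)))).elim
  · exact exists_isDimFiltration_condition
      (C := fun N N' => IsCMModuleGen R (N ⧸ N'.comap N.subtype))

theorem nontrivial_of_mem_associatedPrimes {R : Type*} [CommRing R] {M : Type*} [AddCommGroup M]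
    [Module R M] {p : Ideal R} (hp : p ∈ associatedPrimes R M) : Nontrivial M := by
  by_contra h
  rw [not_nontrivial_iff_subsingleton] at h
  simp [associatedPrimes.eq_empty_of_subsingleton] at hp

theorem natCast_add_le_add_natCast_iff (a k : ℕ) (e : WithBot ℕ∞) :
    (a : WithBot ℕ∞) + k ≤ e + k ↔ (a : WithBot ℕ∞) ≤ e := by
  cases e with
  | bot => exact ⟨fun h => (WithBot.coe_ne_bot (le_bot_iff.1 h)).elim,
      fun h => (WithBot.coe_ne_bot (le_bot_iff.1 h)).elim⟩
  | coe e =>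
    cases e with
    | top => norm_cast; simp
    | coe e => norm_cast; omega

theorem natCast_add_lt_add_natCast_iff (a k : ℕ) (e : WithBot ℕ∞) :
    (a : WithBot ℕ∞) + k < e + k ↔ (a : WithBot ℕ∞) < e := by
  cases e with
  | bot => exact ⟨fun h => (not_lt_bot h).elim, fun h => (not_lt_bot h).elim⟩
  | coe e =>
    cases e with
    | top => norm_cast; simp
    | coe e => norm_cast; omega

variable {R : Type*} [CommRing R] [IsNoetherianRing R] {M : Type*} [AddCommGroup M] [Module R M]
  [Module.Finite R M]

theorem IsCMModule.localization {P Q : Ideal R} [P.IsPrime] [Q.IsPrime] (hPQ : P ≤ Q)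
    (h : IsCMModule (Localization.AtPrime Q) (LocalizedModule Q.primeCompl M)) :
    IsCMModule (Localization.AtPrime P) (LocalizedModule P.primeCompl M) := by
  intro hP
  have hQ : Nontrivial (LocalizedModule Q.primeCompl M) := by
    have hP' : (⟨P, ‹_›⟩ : PrimeSpectrum R) ∈ Module.support R M := Module.mem_support_iff.2 hP
    exact Module.mem_support_iff.1 (Module.mem_support_mono (q := ⟨Q, ‹_›⟩) hPQ hP')
  obtain ⟨n, hn, hdim⟩ := isCMModule_iff.1 h
  obtain ⟨a, -, -, ha, hda, -⟩ := exists_hasRegularSequence_localization hPQ hn hdim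
  exact isCMModule_iff.2 ⟨a, ha, hda⟩ hP

theorem IsCMModule.ringKrullDim_quotient_map_eq_add {P Q : Ideal R} [P.IsPrime] [Q.IsPrime]
    (hPQ : P ≤ Q) (h : IsCMModule (Localization.AtPrime Q) (LocalizedModule Q.primeCompl M))
    {q : Ideal R} (hq : q ∈ associatedPrimes R M) (hqP : q ≤ P) :
    ringKrullDim (Localization.AtPrime Q ⧸ q.map (algebraMap R (Localization.AtPrime Q))) =
      ringKrullDim (Localization.AtPrime P ⧸ q.map (algebraMap R (Localization.AtPrime P))) +
      ringKrullDim (Localization.AtPrime Q ⧸ P.map (algebraMap R (Localization.AtPrime Q))) := by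
  have hqQ' := map_mem_associatedPrimes_localizedModule (hqP.trans hPQ) hq
  have hqP' := map_mem_associatedPrimes_localizedModule hqP hq
  have := nontrivial_of_mem_associatedPrimes hqQ'
  have := nontrivial_of_mem_associatedPrimes hqP'
  obtain ⟨n, hn, hdim⟩ := isCMModule_iff.1 h
  obtain ⟨a, b, rfl, ha, hda, hb⟩ := exists_hasRegularSequence_localization hPQ hn hdim
  rw [hn.ringKrullDim_quotient_eq hdim hqQ', ha.ringKrullDim_quotient_eq hda hqP', hb]
  push_cast
  rfl

omit [IsNoetherianRing R] in
theorem map_comap_atPrime {P : Ideal R} [P.IsPrime] (q : Ideal (Localization.AtPrime P)) :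
    (q.comap (algebraMap R (Localization.AtPrime P))).map (algebraMap R _) = q :=
  IsLocalization.map_under P.primeCompl _ q

theorem isSeqCM_localization_of_isSeqCMGen
    (hdim : ∀ p ∈ associatedPrimes R M, ∀ P : Ideal R, ∀ hP : P.IsMaximal, p ≤ P →
      letI := hP.isPrime
      ringKrullDim (R ⧸ p) =
        ringKrullDim (Localization.AtPrime P ⧸
          p.map (algebraMap R (Localization.AtPrime P))))
    (h : IsSeqCMGen R M) (P : Ideal R) [hP : P.IsPrime] :
    IsSeqCM (Localization.AtPrime P) (LocalizedModule P.primeCompl M) := by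
  rw [isSeqCMGen_iff] at h
  rw [isSeqCM_iff]
  intro e
  obtain ⟨Q, hQ, hPQ⟩ := P.exists_le_maximal hP.ne_top
  have hPmap := Ideal.isPrime_map_of_isLocalizationAtPrime Q (S := Localization.AtPrime Q) hPQ
  obtain ⟨k, hk⟩ := exists_natCast_eq_ringKrullDim_quotient _ hPmap.ne_top
  have key {q : Ideal (Localization.AtPrime P)} (hq : q ∈ associatedPrimes
      (Localization.AtPrime P) (LocalizedModule P.primeCompl M)) :
      ∃ a : ℕ, ringKrullDim (Localization.AtPrime P ⧸ q) = a ∧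
        ringKrullDim (R ⧸ q.comap (algebraMap R (Localization.AtPrime P))) = a + k := by
    obtain ⟨a, ha⟩ := exists_natCast_eq_ringKrullDim_quotient q hq.1.ne_top
    refine ⟨a, ha, ?_⟩
    have hqM := comap_mem_associatedPrimes_localizedModule_iff _ |>.1 hq
    have hqP := le_of_mem_associatedPrimes_localizedModule hq
    let d := ringKrullDim (R ⧸ q.comap (algebraMap R (Localization.AtPrime P)))
    rw [hdim _ hqM Q hQ (hqP.trans hPQ), (h d Q).ringKrullDim_quotient_map_eq_add hPQ
      (mem_associatedPrimes_quotient_supportedPart (isUpperSet_dimLeSet d) (isUpperSet_dimLtSet d)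
        hqM (mem_dimLeSet.2 le_rfl) (fun hlt => lt_irrefl d (mem_dimLtSet.1 hlt))) hqP,
      map_comap_atPrime, ha, hk]
  refine (isCMModule_localized_supportedPart_quotient_iff (isUpperSet_dimLeSet _)
    (isUpperSet_dimLtSet _) (fun q hq => ?_) (fun q hq => ?_)).1 (h (e + k) P)
  · obtain ⟨a, ha, hak⟩ := key hq
    rw [mem_dimLeSet, mem_dimLeSet, ha, hak, natCast_add_le_add_natCast_iff]
  · obtain ⟨a, ha, hak⟩ := key hq
    rw [mem_dimLtSet, mem_dimLtSet, ha, hak, natCast_add_lt_add_natCast_iff]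

theorem isSeqCMGen_of_isSeqCM_localization
    (hdim : ∀ p ∈ associatedPrimes R M, ∀ P : Ideal R, ∀ hP : P.IsMaximal, p ≤ P →
      letI := hP.isPrime
      ringKrullDim (R ⧸ p) =
        ringKrullDim (Localization.AtPrime P ⧸
          p.map (algebraMap R (Localization.AtPrime P))))
    (h : ∀ (P : Ideal R) (hP : P.IsPrime), ⟨P, hP⟩ ∈ Module.support R M →
      IsSeqCM (Localization.AtPrime P) (LocalizedModule P.primeCompl M)) :
    IsSeqCMGen R M := by
  rw [isSeqCMGen_iff]
  intro d P hP hnt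
  obtain ⟨Q, hQ, hPQ⟩ := P.exists_le_maximal hP.ne_top
  have hQM : (⟨Q, hQ.isPrime⟩ : PrimeSpectrum R) ∈ Module.support R M := by
    apply Module.mem_support_mono (p := ⟨P, hP⟩) hPQ
    exact Module.support_subset_of_injective _ (Submodule.subtype_injective _)
      (Module.support_subset_of_surjective _ (Submodule.mkQ_surjective _)
        (Module.mem_support_iff.2 hnt))
  have hdim' {q : Ideal (Localization.AtPrime Q)} (hq : q ∈ associatedPrimes
      (Localization.AtPrime Q) (LocalizedModule Q.primeCompl M)) :
      ringKrullDim (R ⧸ q.comap (algebraMap R (Localization.AtPrime Q))) =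
        ringKrullDim (Localization.AtPrime Q ⧸ q) := by
    rw [hdim _ (comap_mem_associatedPrimes_localizedModule_iff _ |>.1 hq) Q hQ
      (le_of_mem_associatedPrimes_localizedModule hq), map_comap_atPrime]
  refine IsCMModule.localization hPQ ((isCMModule_localized_supportedPart_quotient_iff
    (isUpperSet_dimLeSet d) (isUpperSet_dimLtSet d) (fun q hq => ?_) (fun q hq => ?_)).2
      (isSeqCM_iff.1 (h Q hQ.isPrime hQM) d)) hnt
  · rw [mem_dimLeSet, mem_dimLeSet, hdim' hq]
  · rw [mem_dimLtSet, mem_dimLtSet, hdim' hq]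

end SequentiallyCohenMacaulay

/-- If `dim R/p = dim R_P/pR_P` for every `p ∈ Ass_R M` and every maximal
ideal `P ⊇ p`, then `M` is sequentially Cohen-Macaulay over `R` iff `M_P` is sequentially
Cohen-Macaulay over `R_P` for every `P ∈ Supp_R M`. -/
theorem stmt12 (R : Type*) [CommRing R] [IsNoetherianRing R]
    (M : Type*) [AddCommGroup M] [Module R M] [Module.Finite R M] [Nontrivial M]
    (hdim : ∀ p ∈ associatedPrimes R M, ∀ P : Ideal R, ∀ hP : P.IsMaximal, p ≤ P →
      letI := hP.isPrime
      ringKrullDim (R ⧸ p) =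
        ringKrullDim (Localization.AtPrime P ⧸
          p.map (algebraMap R (Localization.AtPrime P)))) :
    IsSeqCMGen R M ↔
      ∀ (P : Ideal R) (hP : P.IsPrime), ⟨P, hP⟩ ∈ Module.support R M →
        IsSeqCM (Localization.AtPrime P) (LocalizedModule P.primeCompl M) := by
  exact ⟨fun h P _ _ => isSeqCM_localization_of_isSeqCMGen hdim h P,
    isSeqCMGen_of_isSeqCM_localization hdim⟩
end

section
/- Let R be a finitely generated algebra over a field and M a nonzero finitely generated R-module. Then M is a sequentially Cohen-Macaulay R-module if and only if M_P is a sequentially Cohen-Macaulay R_P-module for every prime P in Supp_R M. -/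
open IsLocalRing

open Polynomial in
/-- If `x` lies in `pS` for a prime `p` of an integrally closed domain `R`, the nonleading
coefficients of the minimal polynomial of `x` lie in `p`. -/
theorem minpoly_coeff_mem_of_mem_map {R S : Type*} [CommRing R] [CommRing S] [IsDomain R]
    [IsDomain S] [IsIntegrallyClosed R] [Algebra R S] [Module.IsTorsionFree R S]
    [Algebra.IsIntegral R S] {p : Ideal R} [p.IsPrime] {x : S}
    (hx : x ∈ p.map (algebraMap R S)) {i : ℕ} (hi : i ≠ (minpoly R x).natDegree) :
    (minpoly R x).coeff i ∈ p := by
  obtain ⟨f, hf, hfx, hfp⟩ := exists_monic_aeval_eq_zero_forall_mem_of_mem_map hx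
  have hint : IsIntegral R x := Algebra.IsIntegral.isIntegral x
  have hdvd := minpoly.isIntegrallyClosed_dvd hint hfx
  have hmap : f.map (Ideal.Quotient.mk p) = X ^ f.natDegree := by
    ext j
    rw [coeff_map, coeff_X_pow]
    split_ifs with h
    · rw [h, hf.coeff_natDegree, map_one]
    · exact Ideal.Quotient.eq_zero_iff_mem.mpr (hfp j h)
  have hdvd' := Polynomial.map_dvd (Ideal.Quotient.mk p) hdvd
  rw [hmap, dvd_prime_pow prime_X] at hdvd'
  obtain ⟨m, -, hm⟩ := hdvd'
  have hmon := (minpoly.monic hint).map (Ideal.Quotient.mk p)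
  have heq := eq_of_monic_of_associated hmon (monic_X_pow m) hm
  have hm' : m = (minpoly R x).natDegree := by
    rw [← (minpoly.monic hint).natDegree_map (Ideal.Quotient.mk p), heq, natDegree_X_pow]
  rw [← Ideal.Quotient.eq_zero_iff_mem, ← coeff_map, heq, coeff_X_pow, if_neg (hm' ▸ hi)]

/-- **Going down** for integral extensions of integrally closed domains. -/
theorem hasGoingDown_of_isIntegrallyClosed (R S : Type*) [CommRing R] [CommRing S] [IsDomain R]
    [IsDomain S] [IsIntegrallyClosed R] [Algebra R S] [Module.IsTorsionFree R S]
    [Algebra.IsIntegral R S] : Algebra.HasGoingDown R S where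
  exists_ideal_le_liesOver_of_lt {p} _ Q _ hlt := by
    have hdisj : Disjoint (p.map (algebraMap R S) : Set S)
        ↑(p.primeCompl.map (algebraMap R S) ⊔ Q.primeCompl) := by
      refine Set.disjoint_left.mpr fun y hy hy' ↦ ?_
      obtain ⟨_, ⟨z, hz, rfl⟩, g, hg, rfl⟩ := Submonoid.mem_sup.mp hy'
      have hz0 : z ≠ 0 := fun h ↦ hz (h ▸ p.zero_mem)
      have hint : IsIntegral R g := Algebra.IsIntegral.isIntegral g
      change algebraMap R S z * g ∈ p.map (algebraMap R S) at hy
      rw [← Algebra.smul_def] at hy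
      have hcoeff : ∀ i < (minpoly R g).natDegree, (minpoly R g).coeff i ∈ p := fun i hi ↦ by
        have h := minpoly_coeff_mem_of_mem_map (i := i) hy (by
          rw [IsIntegrallyClosed.minpoly_smul hz0 hint, Polynomial.natDegree_scaleRoots]
          exact hi.ne)
        rw [IsIntegrallyClosed.minpoly_smul hz0 hint, Polynomial.coeff_scaleRoots] at h
        exact (Ideal.IsPrime.mem_or_mem ‹_› h).resolve_right
          fun h ↦ hz (Ideal.IsPrime.mem_of_pow_mem ‹_› _ h)
      refine hg (Ideal.IsPrime.mem_of_pow_mem ‹Q.IsPrime› (minpoly R g).natDegree ?_)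
      have h0 := minpoly.aeval R g
      rw [Polynomial.aeval_eq_sum_range, Finset.sum_range_succ,
        (minpoly.monic hint).coeff_natDegree, one_smul] at h0
      rw [eq_neg_of_add_eq_zero_right h0]
      refine Q.neg_mem (Q.sum_mem fun i hi ↦ ?_)
      rw [Algebra.smul_def]
      exact Q.mul_mem_right _ (hlt.le (hcoeff i (Finset.mem_range.mp hi)))
    obtain ⟨q, hq, hle, hd⟩ := Ideal.exists_le_prime_disjoint _ _ hdisj
    refine ⟨q, fun x hx ↦ ?_, hq, ⟨le_antisymm (Ideal.map_le_iff_le_comap.mp hle) fun x hx ↦ ?_⟩⟩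
    · by_contra hxQ
      exact Set.disjoint_left.mp hd hx (Submonoid.mem_sup_right (S := p.primeCompl.map _) hxQ)
    · by_contra hxp
      exact Set.disjoint_left.mp hd (show algebraMap R S x ∈ (q : Set S) from hx)
        (Submonoid.mem_sup_left (Submonoid.mem_map_of_mem _ hxp))

theorem MvPolynomial.height_of_isMaximal (k : Type*) [Field k] :
    ∀ (n : ℕ) (m : Ideal (MvPolynomial (Fin n) k)) [m.IsMaximal], m.height = n
  | 0, m, _ => by
    let e := (MvPolynomial.isEmptyRingEquiv k (Fin 0))
    have hm : m ≠ ⊤ := Ideal.IsPrime.ne_top'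
    have h := Ideal.height_le_ringKrullDim_of_ne_top hm
    rw [ringKrullDim_eq_of_ringEquiv e, ringKrullDim_eq_zero_of_field] at h
    simpa using h
  | n + 1, m, _ => by
    let e := (MvPolynomial.finSuccEquiv k n).toRingEquiv
    let P : Ideal (Polynomial (MvPolynomial (Fin n) k)) := m.comap e.symm
    have hP : P.IsMaximal := Ideal.comap_isMaximal_of_equiv e.symm
    have : (P.under (MvPolynomial (Fin n) k)).IsMaximal :=
      Polynomial.isMaximal_comap_C_of_isJacobsonRing P
    have : P.LiesOver (P.under (MvPolynomial (Fin n) k)) := ⟨rfl⟩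
    have h := Polynomial.height_eq_height_add_one (P.under (MvPolynomial (Fin n) k)) P
    rw [height_of_isMaximal k n, e.symm.height_comap] at h
    exact_mod_cast h

theorem ringKrullDim_le_of_isIntegral (R S : Type*) [CommRing R] [CommRing S] [Algebra R S]
    [Algebra.IsIntegral R S] : ringKrullDim S ≤ ringKrullDim R :=
  Order.krullDim_le_of_strictMono (PrimeSpectrum.comap (algebraMap R S))
    fun _ _ h ↦ Ideal.IsIntegral.comap_lt_comap h

theorem ringKrullDim_eq_of_isIntegral (R S : Type*) [CommRing R] [CommRing S] [Algebra R S]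
    [Algebra.IsIntegral R S] [FaithfulSMul R S] : ringKrullDim S = ringKrullDim R := by
  refine (ringKrullDim_le_of_isIntegral R S).antisymm (iSup_le fun l ↦ ?_)
  obtain ⟨P, hP, hPl⟩ := Ideal.nonempty_primesOver (S := S) l.head.asIdeal
  have : P.LiesOver l.head.asIdeal := hPl
  obtain ⟨L, hL, -⟩ := Ideal.exists_ltSeries_of_hasGoingUp l P
  exact hL ▸ Order.LTSeries.length_le_krullDim L

/-- The inequality `dim A ≤ ht Q + dim A ⧸ Q` ascends along integral extensions of integrally
closed domains. -/
theorem ringKrullDim_le_height_add_of_isIntegral (B A : Type*) [CommRing B] [CommRing A]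
    [IsDomain B] [IsDomain A] [IsIntegrallyClosed B] [IsNoetherianRing B] [IsNoetherianRing A]
    [Algebra B A]
    [Algebra.IsIntegral B A] [FaithfulSMul B A]
    (h : ∀ (q : Ideal B) [q.IsPrime], ringKrullDim B ≤ q.height + ringKrullDim (B ⧸ q))
    (Q : Ideal A) [Q.IsPrime] :
    ringKrullDim A ≤ Q.height + ringKrullDim (A ⧸ Q) := by
  have := hasGoingDown_of_isIntegrallyClosed B A
  have hht : (Q.under B).height ≤ Q.height := by
    rw [Ideal.height_eq_height_add_of_liesOver_of_hasGoingDown (Q.under B) Q]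
    exact le_self_add
  rw [ringKrullDim_eq_of_isIntegral B A, ringKrullDim_eq_of_isIntegral (B ⧸ Q.under B) (A ⧸ Q)]
  exact (h _).trans (add_le_add_left (WithBot.coe_le_coe.mpr hht) _)

theorem Ideal.height_add_one_le_height_comap_quotientMk {A : Type*} [CommRing A] [IsDomain A]
    [IsNoetherianRing A] {I : Ideal A} (hI : I ≠ ⊥) (Q : Ideal (A ⧸ I)) [Q.IsPrime] :
    Q.height + 1 ≤ (Q.comap (Ideal.Quotient.mk I)).height := by
  obtain ⟨l, hl, hlen⟩ := Q.exists_ltSeries_length_eq_height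
  let L := l.map (PrimeSpectrum.comap (Ideal.Quotient.mk I)) fun a b h ↦
    lt_of_le_not_ge (α := PrimeSpectrum A) (Ideal.comap_mono h.le) fun h' ↦ h.not_ge <|
      (Ideal.comap_le_comap_iff_of_surjective _ Ideal.Quotient.mk_surjective _ _).mp h'
  have hbot : (⊥ : PrimeSpectrum A) < L.head := by
    refine bot_lt_iff_ne_bot.mpr fun h ↦ hI (le_bot_iff.mp ?_)
    have hle : I ≤ L.head.asIdeal := fun x hx ↦ by
      change Ideal.Quotient.mk I x ∈ l.head.asIdeal
      rw [Ideal.Quotient.eq_zero_iff_mem.mpr hx]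
      exact zero_mem _
    rwa [h] at hle
  have h := Order.length_le_height_last (p := L.cons ⊥ hbot)
  rw [← PrimeSpectrum.height_eq_orderHeight] at h
  have hlast : (L.cons ⊥ hbot).last.asIdeal = Q.comap (Ideal.Quotient.mk I) := by
    rw [RelSeries.last_cons]
    change Ideal.comap _ l.last.asIdeal = _
    rw [hl]
  have hlength : ((L.cons ⊥ hbot).length : ℕ∞) = l.length + 1 := by
    rw [RelSeries.cons_length]
    rfl
  rwa [hlast, hlength, hlen] at h

theorem Ideal.height_add_ringKrullDim_quotient_le {A : Type*} [CommRing A] (Q : Ideal A)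
    [Q.IsPrime] : Q.height + ringKrullDim (A ⧸ Q) ≤ ringKrullDim A := by
  let q : PrimeSpectrum A := ⟨Q, ‹_›⟩
  have h : ringKrullDim (A ⧸ Q) = Order.coheight q := by
    rw [ringKrullDim_quotient, Order.coheight_eq_krullDim_Ici]
    rfl
  have : Nonempty (PrimeSpectrum A) := ⟨q⟩
  rw [h, ringKrullDim, Order.krullDim_eq_iSup_height_add_coheight_of_nonempty,
    show Q.height = Order.height q from PrimeSpectrum.height_eq_orderHeight q]
  exact WithBot.coe_le_coe.mpr (le_iSup (fun a ↦ Order.height a + Order.coheight a) q)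

theorem MvPolynomial.ringKrullDim_le_height_add (k : Type*) [Field k] (n : ℕ) :
    ∀ (q : Ideal (MvPolynomial (Fin n) k)) [q.IsPrime],
      (n : WithBot ℕ∞) ≤ q.height + ringKrullDim (MvPolynomial (Fin n) k ⧸ q) := by
  induction n using Nat.strong_induction_on with
  | _ n ih =>
  intro q _
  have hdim (n : ℕ) : ringKrullDim (MvPolynomial (Fin n) k) = n := by
    simp [MvPolynomial.ringKrullDim_of_isNoetherianRing, ringKrullDim_eq_zero_of_field]
  by_cases hq : q = ⊥
  · rw [hq, ringKrullDim_eq_of_ringEquiv (RingEquiv.quotientBot _), hdim, Ideal.height_bot]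
    simp
  obtain ⟨f, hfq, hf⟩ := Ideal.IsPrime.exists_mem_prime_of_ne_bot ‹q.IsPrime› hq
  have hI : (Ideal.span {f}).IsPrime := (Ideal.span_singleton_prime hf.ne_zero).mpr hf
  set I := Ideal.span {f} with hIdef
  have hIq : I ≤ q := (Ideal.span_singleton_le_iff_mem q).mpr hfq
  obtain ⟨s, g, hg, hgi⟩ := exists_integral_inj_algHom_of_fg k (MvPolynomial (Fin n) k ⧸ I)
  algebraize [g.toRingHom]
  have : FaithfulSMul (MvPolynomial (Fin s) k) (MvPolynomial (Fin n) k ⧸ I) :=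
    (faithfulSMul_iff_algebraMap_injective _ _).mpr hg
  have hs := ringKrullDim_eq_of_isIntegral (MvPolynomial (Fin s) k) (MvPolynomial (Fin n) k ⧸ I)
  rw [hdim] at hs
  have hle : ringKrullDim (MvPolynomial (Fin n) k ⧸ I) + 1 ≤ n := hdim n ▸
    ringKrullDim_quotient_succ_le_of_nonZeroDivisor (mem_nonZeroDivisors_of_ne_zero hf.ne_zero)
  obtain ⟨m, hm, hIm⟩ := Ideal.exists_le_maximal I hI.ne_top
  have hge := Ideal.height_le_ringKrullDim_quotient_add_one (hIm (Ideal.mem_span_singleton_self f))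
  rw [MvPolynomial.height_of_isMaximal, ← hIdef, hs] at hge
  rw [hs] at hle
  have hsn : s + 1 = n := le_antisymm (by exact_mod_cast hle) (by exact_mod_cast hge)
  let Q := q.map (Ideal.Quotient.mk I)
  have hQ : Q.IsPrime := Ideal.isPrime_map_quotientMk_of_isPrime hIq
  have key := ringKrullDim_le_height_add_of_isIntegral (MvPolynomial (Fin s) k) _
    (fun q _ ↦ (hdim s).trans_le (ih s (by omega) q)) Q
  rw [hs, ringKrullDim_eq_of_ringEquiv (DoubleQuot.quotQuotEquivQuotOfLE hIq)] at key
  have hht : Q.height + 1 ≤ q.height := by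
    convert Ideal.height_add_one_le_height_comap_quotientMk
      (Ideal.span_singleton_eq_bot.not.mpr hf.ne_zero) Q
    rw [Ideal.comap_map_of_surjective' _ Ideal.Quotient.mk_surjective, Ideal.mk_ker,
      sup_eq_left.mpr hIq]
  calc (n : WithBot ℕ∞) = s + 1 := by exact_mod_cast hsn.symm
    _ ≤ Q.height + ringKrullDim (MvPolynomial (Fin n) k ⧸ q) + 1 := by gcongr
    _ = ((Q.height + 1 : ℕ∞) : WithBot ℕ∞) + ringKrullDim (MvPolynomial (Fin n) k ⧸ q) := by
      push_cast; ring
    _ ≤ _ := add_le_add_left (WithBot.coe_le_coe.mpr hht) _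

/-- The dimension formula for affine domains. -/
theorem ringKrullDim_eq_height_add (k : Type*) {A : Type*} [Field k] [CommRing A] [IsDomain A]
    [Algebra k A] [Algebra.FiniteType k A] (Q : Ideal A) [Q.IsPrime] :
    ringKrullDim A = Q.height + ringKrullDim (A ⧸ Q) := by
  have : IsNoetherianRing A := Algebra.FiniteType.isNoetherianRing k A
  obtain ⟨s, g, hg, hgi⟩ := exists_integral_inj_algHom_of_fg k A
  algebraize [g.toRingHom]
  have : FaithfulSMul (MvPolynomial (Fin s) k) A :=
    (faithfulSMul_iff_algebraMap_injective _ _).mpr hg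
  refine le_antisymm (ringKrullDim_le_height_add_of_isIntegral (MvPolynomial (Fin s) k) A
    (fun q _ ↦ ?_) Q) ?_
  · simpa [MvPolynomial.ringKrullDim_of_isNoetherianRing, ringKrullDim_eq_zero_of_field] using
      MvPolynomial.ringKrullDim_le_height_add k s q
  · exact Q.height_add_ringKrullDim_quotient_le

theorem exists_ringKrullDim_le_of_finiteType (k R : Type*) [Field k] [CommRing R] [Algebra k R]
    [Algebra.FiniteType k R] : ∃ n : ℕ, ringKrullDim R ≤ n := by
  obtain ⟨n, f, hf⟩ := Algebra.FiniteType.iff_quotient_mvPolynomial''.mp ‹Algebra.FiniteType k R›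
  refine ⟨n, (ringKrullDim_le_of_surjective f.toRingHom hf).trans_eq ?_⟩
  simp [MvPolynomial.ringKrullDim_of_isNoetherianRing, ringKrullDim_eq_zero_of_field]

theorem ringKrullDim_quotient_under_eq_add (k : Type*) {R : Type*} [Field k] [CommRing R]
    [Algebra k R] [Algebra.FiniteType k R] (P : Ideal R) [P.IsPrime] (S : Type*) [CommRing S]
    [Algebra R S] [IsLocalization.AtPrime S P] (q : Ideal S) [q.IsPrime] :
    ringKrullDim (R ⧸ q.under R) = ringKrullDim (S ⧸ q) + ringKrullDim (R ⧸ P) := by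
  have hqP : q.under R ≤ P := by
    have := IsLocalization.AtPrime.isLocalRing S P
    exact (Ideal.comap_mono (IsLocalRing.le_maximalIdeal_of_isPrime q)).trans_eq
      (IsLocalization.AtPrime.under_maximalIdeal S P)
  let Q := P.map (Ideal.Quotient.mk (q.under R))
  have hQ : Q.IsPrime := Ideal.isPrime_map_quotientMk_of_isPrime hqP
  have hcomap : Q.comap (Ideal.Quotient.mk (q.under R)) = P := by
    rw [Ideal.comap_map_of_surjective' _ Ideal.Quotient.mk_surjective, Ideal.mk_ker,
      sup_eq_left.mpr hqP]
  have hM : P.primeCompl.map (Ideal.Quotient.mk (q.under R)) = Q.primeCompl := by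
    ext x
    obtain ⟨x, rfl⟩ := Ideal.Quotient.mk_surjective x
    have hx : Ideal.Quotient.mk (q.under R) x ∈ Q ↔ x ∈ P := by rw [← Ideal.mem_comap, hcomap]
    refine ⟨?_, fun h ↦ ⟨x, hx.not.mp h, rfl⟩⟩
    rintro ⟨y, hy, h⟩ hxQ
    rw [← h, SetLike.mem_coe, ← Ideal.mem_comap, hcomap] at hxQ
    exact hy hxQ
  have : IsLocalization.AtPrime (S ⧸ q) Q := by
    rw [IsLocalization.AtPrime, ← hM]
    refine IsLocalization.of_surjective P.primeCompl (S := S) (Ideal.Quotient.mk (q.under R))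
      Ideal.Quotient.mk_surjective (Ideal.Quotient.mk q) Ideal.Quotient.mk_surjective rfl ?_
    rw [Ideal.mk_ker, Ideal.mk_ker]
    exact (IsLocalization.map_under P.primeCompl S q).ge
  rw [ringKrullDim_eq_height_add k Q, IsLocalization.AtPrime.ringKrullDim_eq_height Q (S ⧸ q),
    ringKrullDim_eq_of_ringEquiv (DoubleQuot.quotQuotEquivQuotOfLE hqP)]

theorem ringKrullDim_quotient_lt_iff {R : Type*} [CommRing R] (I : Ideal R) (n : ℕ) :
    ringKrullDim (R ⧸ I) < n ↔
      ∀ p : Ideal R, p.IsPrime → I ≤ p → ringKrullDim (R ⧸ p) < n := by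
  refine ⟨fun h p _ hp ↦ (ringKrullDim_le_of_surjective (Ideal.Quotient.factor hp)
    (Ideal.Quotient.factor_surjective hp)).trans_lt h, fun h ↦ ?_⟩
  by_contra! hn
  rw [ringKrullDim_quotient, Order.le_krullDim_iff] at hn
  obtain ⟨l, hl⟩ := hn
  refine (h l.head.1.asIdeal l.head.1.isPrime l.head.2).not_ge ?_
  rw [ringKrullDim_quotient, Order.le_krullDim_iff]
  exact ⟨⟨l.length, fun i ↦ ⟨l i, LTSeries.head_le l i⟩, l.step⟩, hl⟩

section

variable {R M : Type*} [CommRing R] [AddCommGroup M] [Module R M]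

variable (R M) in
/-- The largest submodule of dimension less than `n`. -/
def dimFiltration (n : ℕ) : Submodule R M where
  carrier := {m | ∀ p : Ideal R, p.IsPrime → (R ∙ m).annihilator ≤ p → ringKrullDim (R ⧸ p) < n}
  zero_mem' p hp h := (hp.ne_top <| top_le_iff.mp <| le_trans (fun r _ ↦
    (Submodule.mem_annihilator_span_singleton _ _).mpr (smul_zero r)) h).elim
  add_mem' {a b} ha hb p hp h := by
    have hab : (R ∙ a).annihilator ⊓ (R ∙ b).annihilator ≤ p := by
      refine le_trans (fun r hr ↦ ?_) h
      simp only [Submodule.mem_inf, Submodule.mem_annihilator_span_singleton] at hr ⊢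
      rw [smul_add, hr.1, hr.2, add_zero]
    exact (hp.inf_le.mp hab).elim (ha p hp) (hb p hp)
  smul_mem' r m hm p hp h := hm p hp <| le_trans (fun s hs ↦ by
    simp only [Submodule.mem_annihilator_span_singleton] at hs ⊢
    rw [smul_comm, hs, smul_zero]) h

theorem mem_dimFiltration {n : ℕ} {m : M} : m ∈ dimFiltration R M n ↔
    ∀ p : Ideal R, p.IsPrime → (R ∙ m).annihilator ≤ p → ringKrullDim (R ⧸ p) < n :=
  Iff.rfl

theorem dimFiltration_mono : Monotone (dimFiltration R M) :=
  fun _ _ h _ hm p hp hmp ↦ (hm p hp hmp).trans_le (by exact_mod_cast h)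

theorem dimFiltration_eq_top {n : ℕ} (hn : ringKrullDim R < n) : dimFiltration R M n = ⊤ :=
  eq_top_iff.mpr fun _ _ p _ _ ↦ (ringKrullDim_quotient_le p).trans_lt hn

theorem moduleDim_lt_iff [IsNoetherianRing R] [Module.Finite R M] (N : Submodule R M) (n : ℕ) :
    moduleDim R N < n ↔ N ≤ dimFiltration R M n := by
  have hann (m : N) : (R ∙ m).annihilator = (R ∙ (m : M)).annihilator := by
    ext r
    simp [Subtype.ext_iff]
  rw [moduleDim, ringKrullDim_quotient_lt_iff]
  have hsupp (p : Ideal R) (hp : p.IsPrime) :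
      Module.annihilator R N ≤ p ↔ ∃ m : N, (R ∙ (m : M)).annihilator ≤ p := by
    simp_rw [← hann]
    exact Module.mem_support_iff_of_finite (p := ⟨p, hp⟩).symm.trans
      Module.mem_support_iff_exists_annihilator
  exact ⟨fun h m hm p hp hmp ↦ h p hp ((hsupp p hp).mpr ⟨⟨m, hm⟩, hmp⟩),
    fun h p hp hNp ↦ by
      obtain ⟨m, hmp⟩ := (hsupp p hp).mp hNp
      exact h m.2 p hp hmp⟩

theorem dimFiltration_zero [IsNoetherianRing R] [Module.Finite R M] :
    dimFiltration R M 0 = ⊥ := by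
  rw [eq_bot_iff]
  intro m hm
  by_contra hne
  have : (R ∙ m).annihilator ≠ ⊤ := fun h ↦ hne <| by
    simpa [Submodule.mem_annihilator_span_singleton] using (Ideal.eq_top_iff_one _).mp h
  obtain ⟨p, hp, hmp⟩ := Ideal.exists_le_maximal _ this
  have h := hm p hp.isPrime hmp
  rw [Nat.cast_zero] at h
  exact h.not_ge ringKrullDim_nonneg_of_nontrivial

theorem isGreatest_moduleDim_iff [IsNoetherianRing R] [Module.Finite R M]
    {d : ℕ} (hR : ringKrullDim R < d) (N : Submodule R M) :
    IsGreatest {N' : Submodule R M | moduleDim R N' ≤ moduleDim R N} N ↔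
      N ∈ Set.range (dimFiltration R M) := by
  constructor
  · intro h
    obtain ⟨n, hn⟩ : ∃ n : ℕ, ∀ x : WithBot ℕ∞, x ≤ moduleDim R N ↔ x < n := by
      have hlt := (ringKrullDim_quotient_le (Module.annihilator R N)).trans_lt hR
      change moduleDim R N < d at hlt
      generalize moduleDim R N = d at hlt
      induction d with
      | bot =>
        refine ⟨0, fun x ↦ ?_⟩
        cases x <;> simp
      | coe d =>
        cases d with
        | top => exact absurd hlt (not_lt.mpr (WithBot.coe_le_coe.mpr le_top))
        | coe d =>
          refine ⟨d + 1, fun x ↦ ?_⟩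
          cases x with
          | bot => simp
          | coe x =>
            norm_cast
            exact (ENat.lt_add_one_iff (by simp)).symm
    simp_rw [hn, moduleDim_lt_iff] at h
    exact ⟨n, le_antisymm (h.2 (Set.mem_ofPred.mpr le_rfl)) h.1⟩
  · rintro ⟨n, rfl⟩
    refine ⟨Set.mem_ofPred.mpr le_rfl, fun N' hN' ↦ ?_⟩
    exact (moduleDim_lt_iff _ _).mp (lt_of_le_of_lt hN' ((moduleDim_lt_iff _ _).mpr le_rfl))

theorem isDimFiltration_iff [IsNoetherianRing R] [Module.Finite R M]
    {d : ℕ} (hR : ringKrullDim R < d) {ℓ : ℕ} {D : Fin (ℓ + 1) → Submodule R M} :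
    IsDimFiltration R M ℓ D ↔ StrictMono D ∧ Set.range D = Set.range (dimFiltration R M) := by
  simp only [IsDimFiltration, isGreatest_moduleDim_iff hR]
  constructor
  · rintro ⟨h0, -, hD, h1, h2⟩
    refine ⟨hD, subset_antisymm ?_ ?_⟩
    · rintro _ ⟨i, rfl⟩
      cases i using Fin.cases with
      | zero => exact ⟨0, dimFiltration_zero.trans h0.symm⟩
      | succ i => exact h1 i
    · intro N hN
      by_cases hN0 : N = ⊥
      · exact ⟨0, h0.trans hN0.symm⟩
      · exact h2 N hN0 hN
  · rintro ⟨hD, h⟩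
    refine ⟨?_, ?_, hD, fun i ↦ h ▸ ⟨_, rfl⟩, fun N _ hN ↦ by rwa [← h] at hN⟩
    · obtain ⟨i, hi⟩ : ⊥ ∈ Set.range D := h ▸ ⟨0, dimFiltration_zero⟩
      exact eq_bot_iff.mpr (hi ▸ hD.monotone (Fin.zero_le i))
    · obtain ⟨i, hi⟩ : ⊤ ∈ Set.range D := h ▸ ⟨d, dimFiltration_eq_top hR⟩
      exact eq_top_iff.mpr (hi ▸ hD.monotone (Fin.le_last i))

/-- A property of consecutive terms of a strict reindexing of an eventually constant monotone
sequence amounts to the same property of consecutive terms of the sequence. -/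
theorem exists_strictMono_range_eq_iff {α : Type*} [PartialOrder α] {G : ℕ → α} (hG : Monotone G)
    {N : ℕ} (hN : ∀ n, G n ≤ G N) {Q : α → α → Prop} (hQ : ∀ a, Q a a) :
    (∃ (ℓ : ℕ) (D : Fin (ℓ + 1) → α), (StrictMono D ∧ Set.range D = Set.range G) ∧
      ∀ i : Fin ℓ, Q (D i.castSucc) (D i.succ)) ↔ ∀ n, Q (G n) (G (n + 1)) := by
  constructor
  · rintro ⟨ℓ, D, ⟨hD, h⟩, hDQ⟩ n
    obtain ⟨i, hi⟩ : G n ∈ Set.range D := h ▸ ⟨n, rfl⟩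
    obtain ⟨j, hj⟩ : G (n + 1) ∈ Set.range D := h ▸ ⟨n + 1, rfl⟩
    rcases (hG n.le_succ).eq_or_lt with heq | hlt
    · exact heq ▸ hQ _
    have hij : i < j := hD.lt_iff_lt.mp (by rwa [hi, hj])
    obtain ⟨i, rfl⟩ : ∃ i', i = Fin.castSucc i' :=
      ⟨i.castPred (Fin.ne_last_of_lt hij), by simp⟩
    have hle : i.succ ≤ j := Fin.castSucc_lt_iff_succ_le.mp hij
    rcases hle.eq_or_lt with rfl | hlt'
    · rw [← hi, ← hj]
      exact hDQ i
    obtain ⟨m, hm⟩ : D i.succ ∈ Set.range G := h ▸ ⟨_, rfl⟩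
    have h1 : G n < G m := by rw [← hi, hm]; exact hD i.castSucc_lt_succ
    have h2 : G m < G (n + 1) := by rw [← hj, hm]; exact hD hlt'
    have := hG.reflect_lt h1
    have := hG.reflect_lt h2
    omega
  · intro h
    suffices H : ∀ m, ∃ l : RelSeries {(a, b) : α × α | a < b ∧ Q a b}, l.last = G m ∧
        ∀ x, x ∈ l ↔ ∃ n ≤ m, G n = x by
      obtain ⟨l, -, hl⟩ := H N
      refine ⟨l.length, l, ⟨Fin.strictMono_iff_lt_succ.mpr fun i ↦ (l.step i).1, ?_⟩,
        fun i ↦ (l.step i).2⟩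
      ext x
      refine (hl x).trans ⟨fun ⟨n, _, hn⟩ ↦ ⟨n, hn⟩, fun ⟨n, hn⟩ ↦ ?_⟩
      rcases le_total n N with hnN | hnN
      · exact ⟨n, hnN, hn⟩
      · exact ⟨N, le_rfl, hn ▸ (hG hnN).antisymm (hN n)⟩
    intro m
    induction m with
    | zero => exact ⟨RelSeries.singleton _ (G 0), by simp, fun x ↦ by
        have : x ∈ RelSeries.singleton {(a, b) : α × α | a < b ∧ Q a b} (G 0) ↔ x = G 0 :=
          ⟨fun ⟨_, h⟩ ↦ h.symm, fun h ↦ ⟨0, h.symm⟩⟩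
        rw [this]
        simp [eq_comm]⟩
    | succ m ih =>
      obtain ⟨l, hl, hmem⟩ := ih
      have hsucc (x : α) : (∃ n ≤ m + 1, G n = x) ↔ (∃ n ≤ m, G n = x) ∨ x = G (m + 1) := by
        simp only [Nat.le_succ_iff, or_and_right, exists_or, exists_eq_left, eq_comm]
      rcases (hG m.le_succ).eq_or_lt with heq | hlt
      · refine ⟨l, hl.trans heq, fun x ↦ ?_⟩
        rw [hmem, hsucc, or_iff_left_of_imp]
        rintro rfl
        exact ⟨m, le_rfl, heq⟩
      · refine ⟨l.snoc (G (m + 1)) ?_, RelSeries.last_snoc .., fun x ↦ ?_⟩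
        · rw [hl]; exact ⟨hlt, h m⟩
        · rw [RelSeries.mem_snoc, hmem, hsucc]

theorem isCMModule_of_subsingleton (R M : Type*) [CommRing R] [IsLocalRing R] [AddCommGroup M]
    [Module R M] [Subsingleton M] : IsCMModule R M :=
  fun h ↦ (not_nontrivial M h).elim

theorem isCMModuleGen_of_subsingleton (R M : Type*) [CommRing R] [AddCommGroup M]
    [Module R M] [Subsingleton M] : IsCMModuleGen R M :=
  fun _ _ ↦ isCMModule_of_subsingleton _ _

instance subsingleton_quotient_comap_subtype_self_s13 (N : Submodule R M) :
    Subsingleton (N ⧸ N.comap N.subtype) :=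
  Submodule.Quotient.subsingleton_iff.mpr (by simp)

theorem isSeqCMGen_iff_s13 [IsNoetherianRing R] [Module.Finite R M] {d : ℕ}
    (hR : ringKrullDim R < d) : IsSeqCMGen R M ↔ ∀ n, IsCMModuleGen R
      (dimFiltration R M (n + 1) ⧸ (dimFiltration R M n).comap
        (dimFiltration R M (n + 1)).subtype) := by
  simp only [IsSeqCMGen, isDimFiltration_iff hR]
  exact exists_strictMono_range_eq_iff dimFiltration_mono
    (fun n ↦ le_top.trans_eq (dimFiltration_eq_top hR).symm)
    (Q := fun A B ↦ IsCMModuleGen R (B ⧸ A.comap B.subtype))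
    fun _ ↦ isCMModuleGen_of_subsingleton _ _

theorem isSeqCM_iff_s13 [IsLocalRing R] [IsNoetherianRing R] [Module.Finite R M] :
    IsSeqCM R M ↔ ∀ n, IsCMModule R
      (dimFiltration R M (n + 1) ⧸ (dimFiltration R M n).comap
        (dimFiltration R M (n + 1)).subtype) := by
  obtain ⟨d, hR⟩ : ∃ d : ℕ, ringKrullDim R < d := by
    have h := Order.krullDim_eq_length_of_finiteDimensionalOrder (α := PrimeSpectrum R)
    exact ⟨_, h.trans_lt (by exact_mod_cast Nat.lt_succ_self _)⟩
  simp only [IsSeqCM, isDimFiltration_iff hR]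
  exact exists_strictMono_range_eq_iff dimFiltration_mono
    (fun n ↦ le_top.trans_eq (dimFiltration_eq_top hR).symm)
    (Q := fun A B ↦ IsCMModule R (B ⧸ A.comap B.subtype))
    fun _ ↦ isCMModule_of_subsingleton _ _

end

/-- Multiplying by an element outside `P` removes the irreducible components of `V(I)` which do
not meet the generizations of `P`. -/
theorem Ideal.exists_notMem_forall_exists_isPrime_le {R : Type*} [CommRing R] [IsNoetherianRing R]
    (I P : Ideal R) [P.IsPrime] : ∃ t ∉ P, ∀ p : Ideal R, p.IsPrime →
      (∀ r, r * t ∈ I → r ∈ p) → ∃ p' : Ideal R, p'.IsPrime ∧ I ≤ p' ∧ p' ≤ p ∧ p' ≤ P := by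
  classical
  let s := I.finite_minimalPrimes_of_isNoetherianRing R |>.toFinset
  have hs {p : Ideal R} : p ∈ s ↔ p ∈ I.minimalPrimes := Set.Finite.mem_toFinset _
  obtain ⟨t, ht, htP⟩ : ∃ t ∈ (s.filter (¬ · ≤ P)).inf id, t ∉ P := by
    refine SetLike.not_le_iff_exists.mp fun h ↦ ?_
    obtain ⟨p, hp, hpP⟩ := (Ideal.IsPrime.inf_le' ‹_›).mp h
    exact (Finset.mem_filter.mp hp).2 hpP
  obtain ⟨N, hN⟩ : ∃ N, ((s.filter (· ≤ P)).inf id * Ideal.span {t}) ^ N ≤ I := by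
    refine Ideal.exists_pow_le_of_le_radical_of_fg ?_ (IsNoetherian.noetherian _)
    rw [← Ideal.sInf_minimalPrimes]
    refine le_sInf fun p hp ↦ ?_
    by_cases hpP : p ≤ P
    · exact Ideal.mul_le_left.trans
        (Finset.inf_le (f := id) (Finset.mem_filter.mpr ⟨hs.mpr hp, hpP⟩))
    · refine Ideal.mul_le_right.trans ((Ideal.span_singleton_le_iff_mem _).mpr ?_)
      exact Finset.inf_le (f := id) (Finset.mem_filter.mpr ⟨hs.mpr hp, hpP⟩) ht
  refine ⟨t ^ N, fun h ↦ htP (‹P.IsPrime›.mem_of_pow_mem _ h), fun p hp h ↦ ?_⟩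
  have hle : (s.filter (· ≤ P)).inf id ^ N ≤ p := fun r hr ↦ h r <| hN <| by
    rw [mul_pow]
    exact Ideal.mul_mem_mul hr (Ideal.pow_mem_pow (Ideal.mem_span_singleton_self t) N)
  obtain ⟨p', hp', hp'p⟩ := (Ideal.IsPrime.inf_le' hp).mp (hp.le_of_pow_le hle)
  rw [Finset.mem_filter, hs] at hp'
  exact ⟨p', hp'.1.1.1, hp'.1.1.2, hp'p, hp'.2⟩

section

variable {R M : Type*} [CommRing R] [AddCommGroup M] [Module R M]
  (P : Ideal R) [P.IsPrime] (S : Type*) [CommRing S] [Algebra R S] [IsLocalization.AtPrime S P]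
  {M' : Type*} [AddCommGroup M'] [Module R M'] [Module S M'] [IsScalarTower R S M']
  (f : M →ₗ[R] M') [IsLocalizedModule P.primeCompl f]

include P in
theorem annihilator_span_singleton_le_iff_of_isLocalizedModule (m : M) (q : Ideal S) [q.IsPrime] :
    (S ∙ f m).annihilator ≤ q ↔ (R ∙ m).annihilator ≤ q.under R := by
  refine ⟨fun h r hr ↦ h ?_, fun h x hx ↦ ?_⟩
  · rw [Submodule.mem_annihilator_span_singleton] at hr ⊢
    rw [algebraMap_smul, ← map_smul, hr, map_zero]
  · obtain ⟨r, s, rfl⟩ := IsLocalization.exists_mk'_eq P.primeCompl x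
    rw [Submodule.mem_annihilator_span_singleton] at hx
    have hr : f (r • m) = 0 := by
      rw [map_smul, ← algebraMap_smul S, ← IsLocalization.mk'_spec' S r s, mul_smul, hx, smul_zero]
    obtain ⟨t, ht⟩ := (IsLocalizedModule.eq_zero_iff P.primeCompl f).mp hr
    have htr : t.1 * r ∈ q.under R := h <| by
      rw [Submodule.mem_annihilator_span_singleton, mul_smul]
      exact ht
    have hu (a : P.primeCompl) : algebraMap R S a ∉ q := fun ha ↦
      ‹q.IsPrime›.ne_top (Ideal.eq_top_of_isUnit_mem _ ha (IsLocalization.map_units S a))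
    have hrq : algebraMap R S r ∈ q := by
      rw [Ideal.mem_comap, map_mul] at htr
      exact (‹q.IsPrime›.mem_or_mem htr).resolve_left (hu t)
    rw [← IsLocalization.mk'_spec' S r s] at hrq
    exact (‹q.IsPrime›.mem_or_mem hrq).resolve_left (hu s)

theorem WithBot.add_natCast_lt_add_iff (a : WithBot ℕ∞) (n c : ℕ) :
    a + c < ((n + c : ℕ) : WithBot ℕ∞) ↔ a < n := by
  cases a with
  | bot =>
    simp only [WithBot.bot_add]
    exact iff_of_true (WithBot.bot_lt_coe _) (WithBot.bot_lt_coe _)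
  | coe a =>
    cases a with
    | top =>
      have h : ((n + c : ℕ) : ℕ∞) ≤ ⊤ + (c : ℕ∞) := by simp
      exact iff_of_false (WithBot.coe_le_coe.mpr h).not_gt (by simp)
    | coe a => norm_cast; simp

theorem apply_mem_dimFiltration_iff (k : Type*) [Field k] [Algebra k R] [Algebra.FiniteType k R]
    {c : ℕ} (hc : ringKrullDim (R ⧸ P) = c) (m : M) (n : ℕ) :
    f m ∈ dimFiltration S M' n ↔ ∀ p : Ideal R, p.IsPrime → (R ∙ m).annihilator ≤ p → p ≤ P →
      ringKrullDim (R ⧸ p) < (n + c : ℕ) := by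
  have hq (q : Ideal S) (_ : q.IsPrime) :
      ringKrullDim (R ⧸ q.under R) < (n + c : ℕ) ↔ ringKrullDim (S ⧸ q) < n := by
    rw [ringKrullDim_quotient_under_eq_add k P S q, hc, WithBot.add_natCast_lt_add_iff]
  rw [mem_dimFiltration]
  refine ⟨fun h p hp hmp hpP ↦ ?_, fun h q hqp hmq ↦ ?_⟩
  · have hd : Disjoint (P.primeCompl : Set R) p :=
      Set.disjoint_left.mpr fun x hx hxp ↦ hx (hpP hxp)
    have hpr := IsLocalization.isPrime_of_isPrime_disjoint P.primeCompl S p hp hd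
    have hu := IsLocalization.under_map_of_isPrime_disjoint P.primeCompl S hp hd
    rw [← hu]
    refine (hq _ hpr).mpr (h _ hpr ?_)
    rwa [annihilator_span_singleton_le_iff_of_isLocalizedModule P, hu]
  · rw [annihilator_span_singleton_le_iff_of_isLocalizedModule P] at hmq
    refine (hq q hqp).mp (h _ (Ideal.IsPrime.under R q) hmq fun x hx ↦ ?_)
    by_contra hxP
    exact hqp.ne_top (Ideal.eq_top_of_isUnit_mem _ hx
      (IsLocalization.map_units S (⟨x, hxP⟩ : P.primeCompl)))

/-- Localization at `P` shifts the filtration by dimension by `dim R ⧸ P`. -/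
theorem localized'_dimFiltration (k : Type*) [Field k] [Algebra k R] [Algebra.FiniteType k R]
    {c : ℕ} (hc : ringKrullDim (R ⧸ P) = c) (n : ℕ) :
    (dimFiltration R M (n + c)).localized' S P.primeCompl f = dimFiltration S M' n := by
  have : IsNoetherianRing R := Algebra.FiniteType.isNoetherianRing k R
  refine le_antisymm ?_ fun x hx ↦ ?_
  · rw [Submodule.localized'_eq_span, Submodule.span_le]
    rintro _ ⟨m, hm, rfl⟩
    exact (apply_mem_dimFiltration_iff P S f k hc m n).mpr fun p hp hmp _ ↦ hm p hp hmp
  · obtain ⟨⟨m, s⟩, rfl⟩ := IsLocalizedModule.mk'_surjective P.primeCompl f x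
    have hm : f m ∈ dimFiltration S M' n := by
      rw [← IsLocalizedModule.mk'_cancel' f m s, Submonoid.smul_def, ← algebraMap_smul S]
      exact Submodule.smul_mem _ _ hx
    rw [apply_mem_dimFiltration_iff P S f k hc m n] at hm
    obtain ⟨t, htP, ht⟩ :=
      Ideal.exists_notMem_forall_exists_isPrime_le (R ∙ m).annihilator P
    refine (Submodule.mem_localized' ..).mpr
      ⟨t • m, fun p hp hmp ↦ ?_, ⟨t, htP⟩ * s, IsLocalizedModule.mk'_cancel_left ..⟩
    obtain ⟨p', hp', hmp', hp'p, hp'P⟩ := ht p hp fun r hr ↦ hmp <| by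
      rw [Submodule.mem_annihilator_span_singleton] at hr ⊢
      rwa [← mul_smul]
    exact (ringKrullDim_le_of_surjective (Ideal.Quotient.factor hp'p)
      (Ideal.Quotient.factor_surjective hp'p)).trans_lt (hm p' hp' hmp' hp'P)

end

theorem isCMModule_congr {R M N : Type*} [CommRing R] [IsLocalRing R] [AddCommGroup M] [Module R M]
    [AddCommGroup N] [Module R N] (e : M ≃ₗ[R] N) : IsCMModule R M ↔ IsCMModule R N := by
  have hdim : moduleDim R M = moduleDim R N := by rw [moduleDim, moduleDim, e.annihilator_eq]
  simp only [IsCMModule, moduleDepth, hdim, e.isRegular_congr, e.toEquiv.nontrivial_congr]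

/-- Localization commutes with subquotients. -/
theorem nonempty_linearEquiv_localizedModule_quotient_comap_subtype {R M : Type*} [CommRing R]
    [AddCommGroup M] [Module R M] (p : Submonoid R) (S : Type*) [CommRing S] [Algebra R S]
    [IsLocalization p S] {M' : Type*} [AddCommGroup M'] [Module R M'] [Module S M']
    [IsScalarTower R S M'] (f : M →ₗ[R] M') [IsLocalizedModule p f] (A B : Submodule R M)
    {T : Type*} [AddCommGroup T] [Module R T] [Module S T] [IsScalarTower R S T]
    (g : (B ⧸ A.comap B.subtype) →ₗ[R] T) [IsLocalizedModule p g] :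
    Nonempty (T ≃ₗ[S] (B.localized' S p f ⧸
      (A.localized' S p f).comap (B.localized' S p f).subtype)) := by
  have h : (A.comap B.subtype).localized' S p (B.toLocalized' S p f) =
      (A.localized' S p f).comap (B.localized' S p f).subtype := by
    have hval (b : B) (s : p) :
        f b = s • (IsLocalizedModule.mk' (B.toLocalized' S p f) b s).1 :=
      congr_arg Subtype.val (IsLocalizedModule.mk'_cancel' (B.toLocalized' S p f) b s).symm
    refine le_antisymm ?_ fun x hx ↦ ?_
    · rintro _ ⟨m, hm, s, rfl⟩
      exact ⟨m, hm, s, IsLocalizedModule.mk'_eq_iff.mpr (hval m s)⟩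
    · obtain ⟨⟨b, s⟩, rfl⟩ := IsLocalizedModule.mk'_surjective p (B.toLocalized' S p f) x
      obtain ⟨a, ha, t, hat⟩ := hx
      have hb : f b = s • IsLocalizedModule.mk' f a t := by
        rw [hat]
        exact hval b s
      rw [← IsLocalizedModule.mk'_one p f b, Submonoid.smul_def, ← IsLocalizedModule.mk'_smul,
        IsLocalizedModule.mk'_eq_mk'_iff] at hb
      obtain ⟨u, hu⟩ := hb
      refine ⟨(u * t) • b, ?_, (u * t) * s, IsLocalizedModule.mk'_cancel_left ..⟩
      change ((u * t) • (b : M)) ∈ A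
      rw [mul_smul, ← hu]
      exact A.smul_mem _ (A.smul_mem _ (A.smul_mem _ ha))
  rw [← h]
  exact ⟨(IsLocalizedModule.linearEquiv p g
    ((A.comap B.subtype).toLocalizedQuotient' S p (B.toLocalized' S p f))
    ).extendScalarsOfIsLocalization p S⟩

theorem isSeqCM_localizedModule_iff (k : Type*) [Field k] {R : Type*} [CommRing R] [Algebra k R]
    [Algebra.FiniteType k R] (M : Type*) [AddCommGroup M] [Module R M] [Module.Finite R M]
    (P : Ideal R) [P.IsPrime] :
    IsSeqCM (Localization.AtPrime P) (LocalizedModule P.primeCompl M) ↔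
      ∀ n, IsCMModule (Localization.AtPrime P) (LocalizedModule P.primeCompl
        (dimFiltration R M (n + 1) ⧸ (dimFiltration R M n).comap
          (dimFiltration R M (n + 1)).subtype)) := by
  have : IsNoetherianRing R := Algebra.FiniteType.isNoetherianRing k R
  have : IsNoetherianRing (Localization.AtPrime P) :=
    IsLocalization.isNoetherianRing P.primeCompl _ this
  obtain ⟨c, hc⟩ : ∃ c : ℕ, ringKrullDim (R ⧸ P) = c := by
    obtain ⟨d, hd⟩ := exists_ringKrullDim_le_of_finiteType k (R ⧸ P)
    have h0 : 0 ≤ ringKrullDim (R ⧸ P) := ringKrullDim_nonneg_of_nontrivial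
    generalize ringKrullDim (R ⧸ P) = e at hd h0
    cases e with
    | bot => simp at h0
    | coe e =>
      cases e with
      | top => exact absurd hd (WithBot.coe_lt_coe.mpr (ENat.natCast_lt_top d)).not_ge
      | coe e => exact ⟨e, rfl⟩
  let S := Localization.AtPrime P
  let f := LocalizedModule.mkLinearMap P.primeCompl M
  have key (n : ℕ) := isCMModule_congr
    (nonempty_linearEquiv_localizedModule_quotient_comap_subtype P.primeCompl S f
      (dimFiltration R M n) (dimFiltration R M (n + 1))
      (LocalizedModule.mkLinearMap P.primeCompl _)).some
  have hloc (n : ℕ) := localized'_dimFiltration (M := M) P S f k hc n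
  rw [isSeqCM_iff_s13]
  refine ⟨fun h n ↦ (key n).mpr ?_, fun h n ↦ ?_⟩
  · rcases lt_or_ge n c with hn | hn
    · have hbot : (dimFiltration R M (n + 1)).localized' S P.primeCompl f = ⊥ := by
        rw [eq_bot_iff, ← dimFiltration_zero, ← hloc 0, zero_add]
        exact (Submodule.localized'gi S P.primeCompl f).gc.monotone_l (dimFiltration_mono hn)
      rw [hbot]
      exact isCMModule_of_subsingleton _ _
    · obtain ⟨n, rfl⟩ := Nat.exists_eq_add_of_le' hn
      rw [add_right_comm, hloc, hloc]
      exact h n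
  · have := (key (n + c)).mp (h (n + c))
    rwa [add_right_comm, hloc, hloc] at this

/-- Over a finitely generated algebra over a field, `M` is sequentially
Cohen-Macaulay iff `M_P` is so over `R_P` for every `P ∈ Supp_R M`. -/
theorem stmt13 (k : Type*) [Field k] (R : Type*) [CommRing R] [Algebra k R]
    [Algebra.FiniteType k R]
    (M : Type*) [AddCommGroup M] [Module R M] [Module.Finite R M] [Nontrivial M] :
    IsSeqCMGen R M ↔
      ∀ (P : Ideal R) (hP : P.IsPrime), ⟨P, hP⟩ ∈ Module.support R M →
        IsSeqCM (Localization.AtPrime P) (LocalizedModule P.primeCompl M) := by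
  have : IsNoetherianRing R := Algebra.FiniteType.isNoetherianRing k R
  obtain ⟨d, hd⟩ := exists_ringKrullDim_le_of_finiteType k R
  have hR : ringKrullDim R < (d + 1 : ℕ) := hd.trans_lt (by exact_mod_cast d.lt_succ_self)
  rw [isSeqCMGen_iff_s13 hR]
  refine ⟨fun h P hP _ ↦ (isSeqCM_localizedModule_iff k M P).mpr fun n ↦ h n P, fun h n P hP ↦ ?_⟩
  revert n
  rw [← isSeqCM_localizedModule_iff k M P]
  by_cases hPM : ⟨P, hP⟩ ∈ Module.support R M
  · exact h P hP hPM
  · have := Module.notMem_support_iff.mp hPM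
    have : IsNoetherianRing (Localization.AtPrime P) :=
      IsLocalization.isNoetherianRing P.primeCompl _ ‹_›
    exact isSeqCM_iff_s13.mpr fun n ↦ isCMModule_of_subsingleton _ _
end
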